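/- Let n ≥ 5 and 1 ≤ q < ∞, and set p = nq. There exists a constant C (depending only on n and q) such that ‖A_*[f₁,…,f_n]‖_{ℓ^q(ℤ)} ≤ C ∏_{i=1}^n ‖f_i‖_{ℓ^p(ℤ)} for all f₁,…,f_n ∈ ℓ^p(ℤ). -/

import Mathlib

open scoped BigOperators ENNReal NNReal
open MeasureTheory Finset

noncomputable section

/-- `sphereCount n lam` is the number of lattice points `x ∈ ℤ^n` with
`x₁² + ⋯ + x_n² = lam`. -/
def sphereCount (n lam : ℕ) : ℕ :=
  {x : Fin n → ℤ | ∑ i, (x i) ^ 2 = (lam : ℤ)}.ncard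

/-- The multilinear spherical average
`A_lam[f₁,…,f_n](y) = (1/r_n(lam)) ∑_{|x|² = lam} f₁(y-x₁)⋯f_n(y-x_n)`. -/
def mulAvg (n lam : ℕ) (f : Fin n → ℤ → ℂ) (y : ℤ) : ℂ :=
  (sphereCount n lam : ℂ)⁻¹ *
    ∑ᶠ x ∈ {x : Fin n → ℤ | ∑ i, (x i) ^ 2 = (lam : ℤ)}, ∏ i, f i (y - x i)

/-- The maximal function `A_*[f₁,…,f_n](y) = sup_{lam ≥ 1} |A_lam[f₁,…,f_n](y)|`. -/
def maxFn (n : ℕ) (f : Fin n → ℤ → ℂ) (y : ℤ) : ℝ≥0∞ :=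
  ⨆ (lam : ℕ) (_ : 1 ≤ lam), (‖mulAvg n lam f y‖₊ : ℝ≥0∞)

/-- The `ℓ^p(ℤ)` norm of a complex-valued function, valued in `ℝ≥0∞`. -/
def lpNorm (p : ℝ) (g : ℤ → ℂ) : ℝ≥0∞ :=
  (∑' x : ℤ, (‖g x‖₊ : ℝ≥0∞) ^ p) ^ (1 / p)

/-- The `ℓ^q(ℤ)` norm of an `ℝ≥0∞`-valued function. -/
def lqNormE (q : ℝ) (g : ℤ → ℝ≥0∞) : ℝ≥0∞ :=
  (∑' x : ℤ, g x ^ q) ^ (1 / q)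

/-!
By AM–GM, `∏ i, |f i (y - x i)|` is at most the average over `i`, cyclically, of
`|f i (y - x i)| ^ (n / 2) * |f (i + 1) (y - x (i + 1))| ^ (n / 2)`. After normalizing the
functions it suffices to bound sums of `F (x i) * G (x j)`, `i ≠ j`, over the sphere `|x|² = lam`,
for nonnegative `F` and `G`. Put `N = ⌊√lam⌋`. By the circle method such a sum is an integral, at
height `1 / N²`, of the product of two exponential sums and the power `n - 2 ≥ 3` of a theta
function `θ`. Here `|θ| ≤ C N`, and modularity bounds `|θ|³` by a sum of weights concentrated
around the rationals with denominator at most `2 N`. Integrating these weights against the product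
of the two exponential sums leaves the kernel `∑ c ^ (-1/2)` over the divisors `c ≤ 2 N` of
`m² - k² = (m - k) (m + k)`. Its rows are bounded in `ℓ^(3/2)` on average, so the sum is
`O(N ^ (n - 2))` as soon as `F` and `G` are too.

On the other side the sphere has at least a constant times `N ^ (n - 2)` points. This follows from
`r₄(m) ≥ m` for `m` coprime to `6`: the quaternions act on `(ℤ/m)²`, and for each `v` in `ℤ/m` some
quaternion of norm `m` annihilates the vector `(1, v)`, different `v` giving different quaternions.

Hence `A_*[f₁, …, f_n]` is at most a constant times `∏ i, M(|f i| ^ (3 n / 4)) ^ (4 / (3 n))`, where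
`M` is the Hardy–Littlewood maximal function. Hölder's inequality and the maximal theorem with
exponent `4 q / 3 > 1` conclude.
-/

section Theta

open Complex
open UpperHalfPlane hiding I
open scoped Real

lemma jacobiTheta₂_add_one_right (z τ : ℂ) :
    jacobiTheta₂ z (τ + 1) = jacobiTheta₂ (z + 1 / 2) τ := by
  refine tsum_congr fun n ↦ ?_
  obtain ⟨k, hk⟩ : Even (n * (n - 1)) := Int.even_mul_pred_self n
  have hk' : (n : ℂ) ^ 2 = 2 * k + n := by
    have : ((n * (n - 1) : ℤ) : ℂ) = ((k + k : ℤ) : ℂ) := by rw [hk]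
    push_cast at this
    linear_combination this
  have hexp : 2 * π * I * n * z + π * I * n ^ 2 * (τ + 1) =
      2 * π * I * n * (z + 1 / 2) + π * I * n ^ 2 * τ + k * (2 * π * I) := by
    linear_combination (π * I) * hk'
  rw [jacobiTheta₂_term, jacobiTheta₂_term, hexp, exp_add _ (k * _), exp_int_mul_two_pi_mul_I,
    mul_one]

lemma norm_jacobiTheta₂_functional_equation (z τ : ℂ) :
    ‖jacobiTheta₂ z τ‖ =
      ‖τ‖ ^ (-(1 / 2) : ℝ) * (‖cexp (-π * I * z ^ 2 / τ)‖ * ‖jacobiTheta₂ (z / τ) (-1 / τ)‖) := by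
  have hfactor : ‖1 / (-I * τ) ^ (1 / 2 : ℂ)‖ = ‖τ‖ ^ (-(1 / 2) : ℝ) := by
    rw [norm_div, norm_one, show (1 / 2 : ℂ) = ((1 / 2 : ℝ) : ℂ) by push_cast; rfl,
      norm_cpow_real, Real.rpow_neg (norm_nonneg _), norm_mul, norm_neg, norm_I, one_mul, one_div]
  rw [jacobiTheta₂_functional_equation, norm_mul, norm_mul, hfactor, mul_assoc]

/-- The second Jacobi theta constant `ϑ₂(τ) = ∑ₙ exp(π i (n + 1/2)² τ)`. Together with
`ϑ₃ = jacobiTheta₂ 0` and `ϑ₄ = jacobiTheta₂ (1/2)` it is permuted by the modular group. -/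
def thetaTwo (τ : ℂ) : ℂ := cexp (π * I * τ / 4) * jacobiTheta₂ (τ / 2) τ

lemma norm_thetaTwo_add_one (τ : ℂ) : ‖thetaTwo (τ + 1)‖ = ‖thetaTwo τ‖ := by
  have htheta : jacobiTheta₂ ((τ + 1) / 2) (τ + 1) = jacobiTheta₂ (τ / 2) τ := by
    rw [jacobiTheta₂_add_one_right, show (τ + 1) / 2 + 1 / 2 = τ / 2 + 1 by ring,
      jacobiTheta₂_add_left]
  rw [thetaTwo, thetaTwo, htheta, norm_mul, norm_mul, norm_exp, norm_exp]
  simp [add_re, mul_re]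

lemma norm_thetaTwo_eq {τ : ℂ} (hτ : τ ≠ 0) :
    ‖thetaTwo τ‖ = ‖τ‖ ^ (-(1 / 2) : ℝ) * ‖jacobiTheta₂ (1 / 2) (-1 / τ)‖ := by
  have hexp : cexp (π * I * τ / 4) * cexp (-π * I * (τ / 2) ^ 2 / τ) = 1 := by
    rw [← exp_add, ← exp_zero]
    congr 1
    field_simp
    ring
  rw [thetaTwo, norm_mul, norm_jacobiTheta₂_functional_equation,
    show τ / 2 / τ = 1 / 2 by field_simp, mul_left_comm, ← mul_assoc ‖cexp _‖, ← norm_mul, hexp,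
    norm_one, one_mul]

lemma norm_jacobiTheta₂_half_eq (τ : ℂ) :
    ‖jacobiTheta₂ (1 / 2) τ‖ = ‖τ‖ ^ (-(1 / 2) : ℝ) * ‖thetaTwo (-1 / τ)‖ := by
  rw [norm_jacobiTheta₂_functional_equation, thetaTwo, norm_mul,
    ← jacobiTheta₂_neg_left (-1 / τ / 2)]
  congr 4
  · ring
  · ring

lemma norm_jacobiTheta₂_le {S T : ℝ} (hT : 0 < T) {z τ : ℂ} (hz : |im z| ≤ S) (hτ : T ≤ im τ) :
    ‖jacobiTheta₂ z τ‖ ≤ ∑' n : ℤ, Real.exp (-π * (T * n ^ 2 - 2 * S * |n|)) :=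
  tsum_of_norm_bounded (by simpa using (summable_pow_mul_jacobiTheta₂_term_bound S hT 0).hasSum)
    (norm_jacobiTheta₂_term_le hT hz hτ)

lemma norm_thetaTwo_le {T : ℝ} (hT : 0 < T) {τ : ℂ} (hτ : T ≤ im τ) :
    ‖thetaTwo τ‖ ≤ ∑' n : ℤ, Real.exp (-π * (T * n ^ 2 - 2 * (T / 2) * |n|)) := by
  rw [thetaTwo, jacobiTheta₂, ← tsum_mul_left]
  refine tsum_of_norm_bounded
    (by simpa using (summable_pow_mul_jacobiTheta₂_term_bound (T / 2) hT 0).hasSum) fun n ↦ ?_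
  have hre : (π * I * τ / 4).re = -π * τ.im / 4 := by simp [mul_re]
  have him : (τ / 2).im = τ.im / 2 := by simp
  rw [norm_mul, norm_exp, norm_jacobiTheta₂_term, hre, him, ← Real.exp_add, Real.exp_le_exp]
  have hsq : T * ((n : ℝ) + 1 / 2) ^ 2 ≤ τ.im * ((n : ℝ) + 1 / 2) ^ 2 := by gcongr
  have habs : T * -|(n : ℝ)| ≤ T * n := by gcongr; exact neg_abs_le _
  calc -π * τ.im / 4 + (-π * n ^ 2 * τ.im - 2 * π * n * (τ.im / 2))
      = -π * (τ.im * ((n : ℝ) + 1 / 2) ^ 2) := by ring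
    _ ≤ -(π * (T * n ^ 2 - 2 * (T / 2) * |(n : ℝ)|)) := by
        rw [neg_mul, neg_le_neg_iff]
        gcongr
        linarith

/-- The quantity `max (|ϑ₂|, |ϑ₃|, |ϑ₄|) · (im τ)^(1/4)`, a function on `SL₂(ℤ) \ ℍ`. -/
def thetaInvariant (τ : ℍ) : ℝ :=
  max (max ‖jacobiTheta₂ 0 τ‖ ‖jacobiTheta₂ (1 / 2) τ‖) ‖thetaTwo τ‖ * τ.im ^ (1 / 4 : ℝ)

lemma thetaInvariant_T_smul (τ : ℍ) : thetaInvariant (ModularGroup.T • τ) = thetaInvariant τ := by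
  have hcoe : (((1 : ℝ) +ᵥ τ : ℍ) : ℂ) = τ + 1 := by
    rw [coe_vadd, ofReal_one, add_comm]
  have hhalf : jacobiTheta₂ (1 / 2 + 1 / 2) τ = jacobiTheta₂ 0 τ := by
    rw [← jacobiTheta₂_add_left 0]
    norm_num
  rw [thetaInvariant, modular_T_smul, hcoe, vadd_im, jacobiTheta₂_add_one_right,
    jacobiTheta₂_add_one_right, norm_thetaTwo_add_one, zero_add, hhalf, max_comm ‖_‖ ‖_‖,
    thetaInvariant]

lemma inv_sq_rpow_quarter {x : ℝ} (hx : 0 ≤ x) :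
    ((x ^ 2)⁻¹) ^ (1 / 4 : ℝ) = x ^ (-(1 / 2) : ℝ) := by
  rw [Real.inv_rpow (by positivity), ← Real.rpow_natCast, ← Real.rpow_mul hx, Real.rpow_neg hx]
  norm_num

lemma thetaInvariant_S_smul (τ : ℍ) : thetaInvariant (ModularGroup.S • τ) = thetaInvariant τ := by
  have hcoe : ((ModularGroup.S • τ : ℍ) : ℂ) = -1 / τ := by
    rw [modular_S_smul, coe_mk, neg_div, one_div, inv_neg]
  have him : (ModularGroup.S • τ).im = τ.im * (‖(τ : ℂ)‖ ^ 2)⁻¹ := by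
    rw [ModularGroup.im_smul_eq_div_normSq, ModularGroup.denom_S, normSq_eq_norm_sq, div_eq_mul_inv]
  have hzero : ‖jacobiTheta₂ 0 τ‖ = ‖(τ : ℂ)‖ ^ (-(1 / 2) : ℝ) * ‖jacobiTheta₂ 0 (-1 / τ)‖ := by
    simpa using norm_jacobiTheta₂_functional_equation 0 τ
  rw [thetaInvariant, thetaInvariant, him, hcoe, hzero, norm_jacobiTheta₂_half_eq τ,
    norm_thetaTwo_eq τ.ne_zero, ← mul_max_of_nonneg _ _ (by positivity),
    ← mul_max_of_nonneg _ _ (by positivity), Real.mul_rpow τ.im_pos.le (by positivity),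
    inv_sq_rpow_quarter (norm_nonneg _), max_right_comm]
  ring

lemma thetaInvariant_smul (g : Matrix.SpecialLinearGroup (Fin 2) ℤ) (τ : ℍ) :
    thetaInvariant (g • τ) = thetaInvariant τ := by
  have hg : g ∈ Subgroup.closure {ModularGroup.S, ModularGroup.T} := by
    simp [SpecialLinearGroup.SL2Z_generators]
  induction hg using Subgroup.closure_induction generalizing τ with
  | mem g hg =>
    obtain rfl | rfl := hg
    exacts [thetaInvariant_S_smul τ, thetaInvariant_T_smul τ]
  | one => rw [one_smul]
  | mul g h _ _ hg hh => rw [mul_smul, hg, hh]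
  | inv g _ hg => rw [← hg, smul_inv_smul]

lemma exists_thetaInvariant_le :
    ∃ K : ℝ, 0 < K ∧ ∀ τ : ℍ, 1 / 2 ≤ τ.im → thetaInvariant τ ≤ K * τ.im ^ (1 / 4 : ℝ) := by
  set K := ∑' n : ℤ, Real.exp (-π * (1 / 2 * n ^ 2 - 2 * (1 / 2 / 2) * |n|))
  refine ⟨max K 1, by positivity, fun τ hτ ↦ ?_⟩
  have hjacobi (z : ℂ) (hz : z.im = 0) : ‖jacobiTheta₂ z τ‖ ≤ K :=
    norm_jacobiTheta₂_le one_half_pos (by rw [hz]; norm_num) hτ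
  refine mul_le_mul_of_nonneg_right ?_ (Real.rpow_nonneg τ.im_pos.le _)
  refine le_max_of_le_left (max_le (max_le (hjacobi _ zero_im) (hjacobi _ (by simp))) ?_)
  exact norm_thetaTwo_le one_half_pos hτ

theorem exists_norm_jacobiTheta_le :
    ∃ C : ℝ, 0 < C ∧ ∀ τ : ℍ, ∃ c d : ℤ, IsCoprime c d ∧ ‖(c : ℂ) * τ + d‖ ^ 2 ≤ 2 * τ.im ∧
      ‖jacobiTheta τ‖ ≤ C * ‖(c : ℂ) * τ + d‖ ^ (-(1 / 2) : ℝ) := by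
  obtain ⟨K, hK, hle⟩ := exists_thetaInvariant_le
  refine ⟨K, hK, fun τ ↦ ?_⟩
  obtain ⟨g, hg⟩ := ModularGroup.exists_smul_mem_fd τ
  have himg : 1 / 2 ≤ (g • τ).im := by
    nlinarith [ModularGroup.three_le_four_mul_im_sq_of_mem_fd hg, (g • τ).im_pos]
  have hdenom : denom (g : GL (Fin 2) ℝ) τ = (g 1 0 : ℂ) * τ + g 1 1 := by simp [denom]
  have him : (g • τ).im = τ.im * (‖(g 1 0 : ℂ) * τ + g 1 1‖ ^ 2)⁻¹ := by
    rw [ModularGroup.im_smul_eq_div_normSq, hdenom, normSq_eq_norm_sq, div_eq_mul_inv]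
  have hne : 0 < ‖(g 1 0 : ℂ) * τ + g 1 1‖ := by
    rw [← hdenom]
    exact norm_pos_iff.mpr (denom_ne_zero _ τ)
  refine ⟨g 1 0, g 1 1, g.isCoprime_row 1, ?_, ?_⟩
  · rw [him, ← div_eq_mul_inv, le_div_iff₀ (by positivity)] at himg
    linarith
  · have hinv := hle (g • τ) himg
    rw [thetaInvariant_smul, him, Real.mul_rpow τ.im_pos.le (by positivity),
      inv_sq_rpow_quarter hne.le, ← mul_assoc, mul_right_comm] at hinv
    refine le_of_mul_le_mul_right (le_trans ?_ hinv) (Real.rpow_pos_of_pos τ.im_pos (1 / 4))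
    rw [thetaInvariant, jacobiTheta_eq_jacobiTheta₂]
    refine mul_le_mul_of_nonneg_right ?_ (Real.rpow_nonneg τ.im_pos.le _)
    exact le_max_of_le_left (le_max_left _ _)

end Theta

section ThetaArcs

open Complex
open scoped Real

/-- The term `exp(π i m² τ)` of the theta series `jacobiTheta τ`. -/
def thetaTerm (m : ℤ) (τ : ℂ) : ℂ := cexp (π * I * (m : ℂ) ^ 2 * τ)

lemma norm_thetaTerm (m : ℤ) (τ : ℂ) : ‖thetaTerm m τ‖ = Real.exp (-π * m ^ 2 * τ.im) := by
  have harg : π * I * (m : ℂ) ^ 2 * τ = ((π * m ^ 2 : ℝ) : ℂ) * τ * I := by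
    push_cast
    ring
  rw [thetaTerm, norm_exp, harg, mul_I_re, im_ofReal_mul, neg_mul, neg_mul]

lemma summable_thetaTerm {τ : ℂ} (hτ : 0 < τ.im) : Summable fun m ↦ thetaTerm m τ := by
  simpa [thetaTerm, jacobiTheta₂_term] using (hasSum_jacobiTheta₂_term 0 hτ).summable

lemma exists_finset_norm_jacobiTheta_sub_sum_le {y : ℝ} (hy : 0 < y) (B : Finset ℤ) :
    ∃ S, B ⊆ S ∧ ∀ τ : ℂ, τ.im = y → ‖jacobiTheta τ - ∑ m ∈ S, thetaTerm m τ‖ ≤ 1 := by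
  have htail := tendsto_tsum_compl_atTop_zero fun m : ℤ ↦ Real.exp (-π * m ^ 2 * y)
  obtain ⟨S, hS, hBS⟩ :=
    ((htail.eventually (gt_mem_nhds one_pos)).and (Filter.eventually_ge_atTop B)).exists
  refine ⟨S, hBS, fun τ hτ ↦ ?_⟩
  have hsum := summable_thetaTerm (hτ ▸ hy)
  have hnorm := hsum.norm.subtype {m | m ∉ S}
  have hsplit : jacobiTheta τ - ∑ m ∈ S, thetaTerm m τ = ∑' m : {m // m ∉ S}, thetaTerm m τ := by
    rw [sub_eq_iff_eq_add', hsum.sum_add_tsum_subtype_compl S]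
    rfl
  rw [hsplit]
  refine (norm_tsum_le_tsum_norm hnorm).trans (le_trans (le_of_eq ?_) hS.le)
  simp only [norm_thetaTerm, hτ]
  rfl

/-- A measure, at height `y`, of the distance from `t` to the rationals of denominator `c`:
the distance from `c t` to the nearest integer, plus `c y`. -/
def arcDist (y : ℝ) (c : ℕ) (t : ℝ) : ℝ := ‖((c * t : ℝ) : UnitAddCircle)‖ + c * y

lemma norm_unitAddCircle_le_abs_sub (x : ℝ) (k : ℤ) : ‖(x : UnitAddCircle)‖ ≤ |x - k| := by
  rw [UnitAddCircle.norm_eq]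
  exact round_le x k

lemma norm_unitAddCircle_le_half (x : ℝ) : ‖(x : UnitAddCircle)‖ ≤ 1 / 2 := by
  rw [UnitAddCircle.norm_eq]
  exact abs_sub_round x

lemma arcDist_natAbs_le {y : ℝ} (hy : 0 < y) (t : ℝ) (c d : ℤ) :
    arcDist y c.natAbs t ≤ 2 * ‖(c : ℂ) * (t + y * I) + d‖ := by
  have hre : |c * t + d| ≤ ‖(c : ℂ) * (t + y * I) + d‖ := by
    simpa using abs_re_le_norm ((c : ℂ) * (t + y * I) + d)
  have him : |(c : ℝ)| * y ≤ ‖(c : ℂ) * (t + y * I) + d‖ := by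
    simpa [abs_mul, abs_of_pos hy] using abs_im_le_norm ((c : ℂ) * (t + y * I) + d)
  have hcircle : ‖((c.natAbs * t : ℝ) : UnitAddCircle)‖ ≤ |c * t + d| := by
    rw [Nat.cast_natAbs, Int.cast_abs]
    rcases abs_choice (c : ℝ) with h | h <;> rw [h]
    · simpa using norm_unitAddCircle_le_abs_sub (c * t) (-d)
    · simpa [abs_sub_comm, add_comm] using norm_unitAddCircle_le_abs_sub (-c * t) d
  rw [arcDist, Nat.cast_natAbs, Int.cast_abs]
  rw [Nat.cast_natAbs, Int.cast_abs] at hcircle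
  linarith

lemma le_arcDist {y : ℝ} (hy : 0 < y) {c : ℕ} (hc : 1 ≤ c) (t : ℝ) : y ≤ arcDist y c t :=
  calc y ≤ c * y := le_mul_of_one_le_left hy.le (by exact_mod_cast hc)
    _ ≤ arcDist y c t := le_add_of_nonneg_left (norm_nonneg _)

lemma arcDist_le_three {y : ℝ} {c : ℕ} (hcy : c ^ 2 * y ≤ 2) (hy : 0 < y) (t : ℝ) :
    arcDist y c t ≤ 3 := by
  have hc : (c : ℝ) * y ≤ c ^ 2 * y := by
    gcongr
    exact_mod_cast Nat.le_self_pow two_ne_zero c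
  rw [arcDist]
  linarith [norm_unitAddCircle_le_half (c * t)]

lemma exists_arcDist_le {y : ℝ} (hy : 0 < y) (hy1 : y ≤ 1) (t : ℝ) {c d : ℤ} (hcd : IsCoprime c d)
    (hnorm : ‖(c : ℂ) * (t + y * I) + d‖ ^ 2 ≤ 2 * y) :
    ∃ a : ℕ, 1 ≤ a ∧ a ^ 2 * y ≤ 2 ∧ arcDist y a t ≤ 2 * ‖(c : ℂ) * (t + y * I) + d‖ := by
  rcases eq_or_ne c 0 with rfl | hc
  · have hd : ‖(d : ℂ)‖ = 1 := by
      rcases Int.isUnit_iff.mp (isCoprime_zero_left.mp hcd) with rfl | rfl <;> simp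
    refine ⟨1, le_rfl, by norm_num; linarith, ?_⟩
    rw [arcDist, Int.cast_zero, zero_mul, zero_add, hd]
    push_cast
    linarith [norm_unitAddCircle_le_half (1 * t)]
  · refine ⟨c.natAbs, Int.natAbs_pos.mpr hc, ?_, arcDist_natAbs_le hy t c d⟩
    have him : |(c : ℝ)| * y ≤ ‖(c : ℂ) * (t + y * I) + d‖ := by
      simpa [abs_mul, abs_of_pos hy] using abs_im_le_norm ((c : ℂ) * (t + y * I) + d)
    refine le_of_mul_le_mul_right ?_ hy
    calc (c.natAbs : ℝ) ^ 2 * y * y = (|(c : ℝ)| * y) ^ 2 := by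
          rw [Nat.cast_natAbs, Int.cast_abs]
          ring
      _ ≤ ‖(c : ℂ) * (t + y * I) + d‖ ^ 2 := by gcongr
      _ ≤ 2 * y := hnorm

theorem exists_norm_le_arcDist_rpow :
    ∃ C : ℝ, 0 < C ∧ ∀ y : ℝ, 0 < y → y ≤ 1 → ∀ (t : ℝ) (z : ℂ),
      ‖jacobiTheta (t + y * I) - z‖ ≤ 1 →
      ∃ c : ℕ, 1 ≤ c ∧ c ^ 2 * y ≤ 2 ∧ ‖z‖ ≤ C * arcDist y c t ^ (-(1 / 2) : ℝ) := by
  obtain ⟨C, hC, htheta⟩ := exists_norm_jacobiTheta_le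
  refine ⟨C * 2 ^ (1 / 2 : ℝ) + 3 ^ (1 / 2 : ℝ), by positivity, fun y hy hy1 t z hz ↦ ?_⟩
  obtain ⟨c, d, hcd, hsq, hle⟩ := htheta ⟨t + y * I, by simpa using hy⟩
  simp only [UpperHalfPlane.mk_im, add_im, ofReal_im, mul_im, ofReal_re, I_re, I_im, mul_one,
    mul_zero, zero_add, add_zero] at hsq hle
  obtain ⟨a, ha, hay, haD⟩ := exists_arcDist_le hy hy1 t hcd hsq
  have hpos : 0 < arcDist y a t := hy.trans_le (le_arcDist hy ha t)
  refine ⟨a, ha, hay, ?_⟩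
  have hD : ‖(c : ℂ) * (t + y * I) + d‖ ^ (-(1 / 2) : ℝ) ≤
      2 ^ (1 / 2 : ℝ) * arcDist y a t ^ (-(1 / 2) : ℝ) := by
    calc _ ≤ (arcDist y a t / 2) ^ (-(1 / 2) : ℝ) :=
          Real.rpow_le_rpow_of_nonpos (by positivity) (by linarith) (by norm_num)
      _ = 2 ^ (1 / 2 : ℝ) * arcDist y a t ^ (-(1 / 2) : ℝ) := by
          rw [Real.div_rpow hpos.le zero_le_two, Real.rpow_neg zero_le_two, div_inv_eq_mul,
            mul_comm]
  have hone : 1 ≤ (3 : ℝ) ^ (1 / 2 : ℝ) * arcDist y a t ^ (-(1 / 2) : ℝ) := by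
    rw [Real.rpow_neg hpos.le, ← div_eq_mul_inv, one_le_div (by positivity)]
    exact Real.rpow_le_rpow hpos.le (arcDist_le_three hay hy t) (by norm_num)
  calc ‖z‖ ≤ ‖jacobiTheta (t + y * I)‖ + ‖jacobiTheta (t + y * I) - z‖ := by
        simpa using norm_sub_le (jacobiTheta (t + y * I)) (jacobiTheta (t + y * I) - z)
    _ ≤ C * (2 ^ (1 / 2 : ℝ) * arcDist y a t ^ (-(1 / 2) : ℝ)) +
          3 ^ (1 / 2 : ℝ) * arcDist y a t ^ (-(1 / 2) : ℝ) := by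
        gcongr
        exacts [hle.trans (by gcongr), hz.trans hone]
    _ = _ := by ring

/-- The weight `arcDist y c t ^ (-3/2)` that the denominator `c` contributes to `|θ(t + i y)|³`. -/
def arcWeight (y : ℝ) (c : ℕ) (t : ℝ) : ℝ := arcDist y c t ^ (-(3 / 2) : ℝ)

lemma arcWeight_nonneg {y : ℝ} (hy : 0 ≤ y) (c : ℕ) (t : ℝ) : 0 ≤ arcWeight y c t := by
  unfold arcWeight arcDist
  positivity

/-- The total weight at height `y` of the denominators up to `M`. -/
def arcWeightSum (y : ℝ) (M : ℕ) (t : ℝ) : ℝ := ∑ c ∈ Icc 1 M, arcWeight y c t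

theorem exists_norm_theta_le :
    ∃ C : ℝ, 0 < C ∧ ∀ N : ℕ, 1 ≤ N → ∀ (t : ℝ) (z : ℂ),
      ‖jacobiTheta (t + (((N : ℝ) ^ 2)⁻¹ : ℝ) * I) - z‖ ≤ 1 →
      ‖z‖ ≤ C * N ∧ ‖z‖ ^ 3 ≤ C * arcWeightSum ((N : ℝ) ^ 2)⁻¹ (2 * N) t := by
  obtain ⟨C, hC, harc⟩ := exists_norm_le_arcDist_rpow
  refine ⟨max C (C ^ 3), by positivity, fun N hN t z hz ↦ ?_⟩
  have hN' : (1 : ℝ) ≤ N := by exact_mod_cast hN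
  have hy : 0 < ((N : ℝ) ^ 2)⁻¹ := by positivity
  obtain ⟨c, hc, hcy, hzc⟩ := harc _ hy (inv_le_one_of_one_le₀ (one_le_pow₀ hN')) t z hz
  have hpos : 0 < arcDist ((N : ℝ) ^ 2)⁻¹ c t := hy.trans_le (le_arcDist hy hc t)
  constructor
  · calc ‖z‖ ≤ C * arcDist ((N : ℝ) ^ 2)⁻¹ c t ^ (-(1 / 2) : ℝ) := hzc
      _ ≤ C * (((N : ℝ) ^ 2)⁻¹) ^ (-(1 / 2) : ℝ) := by
          gcongr C * ?_
          exact Real.rpow_le_rpow_of_nonpos hy (le_arcDist hy hc t) (by norm_num)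
      _ = C * N := by
          rw [← Real.rpow_natCast, ← Real.rpow_neg (by positivity), ← Real.rpow_mul (by positivity)]
          norm_num
      _ ≤ max C (C ^ 3) * N := by gcongr; exact le_max_left _ _
  · have hcN : c ∈ Icc 1 (2 * N) := by
      refine mem_Icc.mpr ⟨hc, ?_⟩
      rw [← div_eq_mul_inv, div_le_iff₀ (by positivity)] at hcy
      have : (c : ℝ) ≤ 2 * N := by nlinarith
      exact_mod_cast this
    calc ‖z‖ ^ 3 ≤ (C * arcDist ((N : ℝ) ^ 2)⁻¹ c t ^ (-(1 / 2) : ℝ)) ^ 3 := by gcongr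
      _ = C ^ 3 * arcWeight ((N : ℝ) ^ 2)⁻¹ c t := by
          rw [mul_pow, arcWeight, ← Real.rpow_mul_natCast hpos.le]
          norm_num
      _ ≤ max C (C ^ 3) * arcWeightSum ((N : ℝ) ^ 2)⁻¹ (2 * N) t := by
          gcongr
          · exact arcWeight_nonneg hy.le c t
          · exact le_max_right _ _
          · exact single_le_sum (fun c _ ↦ arcWeight_nonneg hy.le c t) hcN

end ThetaArcs

section LatticeSphere

/-- The set of lattice points `x ∈ ℤⁿ` with `|x|² = lam`, as a finset. -/
def latticeSphere (n lam : ℕ) : Finset (Fin n → ℤ) :=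
  {x ∈ Fintype.piFinset fun _ ↦ Icc (-(Nat.sqrt lam : ℤ)) (Nat.sqrt lam) | ∑ i, x i ^ 2 = (lam : ℤ)}

variable {n lam : ℕ} {x : Fin n → ℤ}

lemma mem_Icc_sqrt_of_sum_sq_eq (hx : ∑ i, x i ^ 2 = (lam : ℤ)) (i : Fin n) :
    x i ∈ Icc (-(Nat.sqrt lam : ℤ)) (Nat.sqrt lam) := by
  rw [mem_Icc, ← abs_le, Int.abs_eq_natAbs, Nat.cast_le, Nat.le_sqrt']
  zify
  rw [sq_abs, ← hx]
  exact single_le_sum (fun j _ ↦ sq_nonneg (x j)) (mem_univ i)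

lemma mem_latticeSphere : x ∈ latticeSphere n lam ↔ ∑ i, x i ^ 2 = (lam : ℤ) := by
  rw [latticeSphere, mem_filter, Fintype.mem_piFinset]
  exact and_iff_right_of_imp mem_Icc_sqrt_of_sum_sq_eq

lemma coe_latticeSphere :
    (latticeSphere n lam : Set (Fin n → ℤ)) = {x | ∑ i, x i ^ 2 = (lam : ℤ)} :=
  Set.ext fun _ ↦ mem_latticeSphere

lemma card_latticeSphere (n lam : ℕ) : #(latticeSphere n lam) = sphereCount n lam := by
  rw [sphereCount, ← coe_latticeSphere, Set.ncard_coe_finset]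

end LatticeSphere

section FourSquares

open Quaternion
open scoped Matrix

lemma exists_sq_add_sq_eq_neg_one {m : ℕ} (hm : Odd m) : ∃ a b : ZMod m, a ^ 2 + b ^ 2 = -1 := by
  have hcop : Nat.Coprime 4 m := (Nat.coprime_two_left.mpr hm).pow_left 2
  have : NeZero (4 * m) := ⟨mul_ne_zero four_ne_zero hm.pos.ne'⟩
  let e := ZMod.chineseRemainder hcop
  have hunit : IsUnit (e.symm (1, -1)) :=
    (Prod.isUnit_iff.mpr ⟨isUnit_one, isUnit_one.neg⟩).map e.symm
  obtain ⟨p, -, hp, hpe⟩ := Nat.forall_exists_prime_gt_and_eq_mod hunit 0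
  have hpair : ((p : ZMod 4), (p : ZMod m)) = (1, -1) := by
    rw [← e.apply_symm_apply (1, -1), ← hpe, map_natCast]
    rfl
  obtain ⟨hp4, hpm⟩ := Prod.mk.inj hpair
  have : Fact p.Prime := ⟨hp⟩
  have hp4' : p % 4 = 1 := (ZMod.natCast_eq_natCast_iff' p 1 4).mp (by exact_mod_cast hp4)
  obtain ⟨a, b, hab⟩ := Nat.Prime.sq_add_sq (p := p) (by omega)
  exact ⟨a, b, by rw [← hpm, ← hab]; push_cast; rfl⟩

variable {R : Type*} [CommRing R] {a b : R}

/-- The representation of the Lipschitz quaternions on `R²`, where `a² + b² = -1` in `R`, given by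
`i ↦ [[0, -1], [1, 0]]` and `j ↦ [[a, b], [b, -a]]`. -/
def quaternionRep (h : a ^ 2 + b ^ 2 = -1) : ℍ[ℤ] →ₐ[ℤ] Matrix (Fin 2) (Fin 2) R :=
  QuaternionAlgebra.Basis.liftHom
    { i := !![0, -1; 1, 0]
      j := !![a, b; b, -a]
      k := !![-b, a; a, b]
      i_mul_i := by ext i j; fin_cases i <;> fin_cases j <;> simp
      j_mul_j := by
        have h₁ : a * a + b * b = -1 := by linear_combination h
        have h₂ : b * b + a * a = -1 := by linear_combination h
        ext i j
        fin_cases i <;> fin_cases j <;> simp [h₁, h₂, mul_comm b a]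
      i_mul_j := by simp
      j_mul_i := by simp }

lemma quaternionRep_apply (h : a ^ 2 + b ^ 2 = -1) (x : ℍ[ℤ]) :
    quaternionRep h x = !![x.re + a * x.imJ - b * x.imK, -x.imI + b * x.imJ + a * x.imK;
      x.imI + b * x.imJ + a * x.imK, x.re - a * x.imJ + b * x.imK] := by
  change QuaternionAlgebra.Basis.lift _ x = _
  ext i j
  fin_cases i <;> fin_cases j <;>
    simp [QuaternionAlgebra.Basis.lift, Matrix.intCast_apply] <;> ring

/-- The left ideal of the Lipschitz quaternions annihilating the vector `(1, v)`. -/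
def annihilatorIdeal (h : a ^ 2 + b ^ 2 = -1) (v : R) : Ideal ℍ[ℤ] where
  carrier := {x | quaternionRep h x *ᵥ ![1, v] = 0}
  add_mem' hx hy := by
    rw [Set.mem_ofPred_eq] at hx hy ⊢
    rw [map_add, Matrix.add_mulVec, hx, hy, add_zero]
  zero_mem' := by simp
  smul_mem' z x hx := by
    rw [Set.mem_ofPred_eq] at hx ⊢
    rw [smul_eq_mul, map_mul, ← Matrix.mulVec_mulVec, hx, Matrix.mulVec_zero]

lemma mem_annihilatorIdeal {h : a ^ 2 + b ^ 2 = -1} {v : R} {x : ℍ[ℤ]} :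
    x ∈ annihilatorIdeal h v ↔ quaternionRep h x *ᵥ ![1, v] = 0 := Iff.rfl

lemma intCast_mem_annihilatorIdeal {h : a ^ 2 + b ^ 2 = -1} {v : R} {k : ℤ} :
    (k : ℍ[ℤ]) ∈ annihilatorIdeal h v ↔ (k : R) = 0 := by
  rw [mem_annihilatorIdeal, map_intCast, Matrix.intCast_mulVec, funext_iff, Fin.forall_fin_two]
  simp +contextual

lemma sub_mul_quaternionRep_eq_zero {h : a ^ 2 + b ^ 2 = -1} {v w : R} {x : ℍ[ℤ]}
    (hv : x ∈ annihilatorIdeal h v) (hw : x ∈ annihilatorIdeal h w) (i j : Fin 2) :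
    (v - w) * quaternionRep h x i j = 0 := by
  have hvi := congrFun (mem_annihilatorIdeal.mp hv) i
  have hwi := congrFun (mem_annihilatorIdeal.mp hw) i
  simp only [Matrix.mulVec, dotProduct, Fin.sum_univ_two, Matrix.cons_val_zero,
    Matrix.cons_val_one, mul_one, Pi.zero_apply] at hvi hwi
  have hone : (v - w) * quaternionRep h x i 1 = 0 := by linear_combination hvi - hwi
  have hzero : (v - w) * quaternionRep h x i 0 = 0 := by
    linear_combination (v - w) * hvi - v * hone
  fin_cases j
  exacts [hzero, hone]

lemma sub_mul_intCast_eq_zero {h : a ^ 2 + b ^ 2 = -1} (h2 : IsUnit (2 : R)) {v w : R} {x : ℍ[ℤ]}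
    (hv : x ∈ annihilatorIdeal h v) (hw : x ∈ annihilatorIdeal h w) :
    (v - w) * x.re = 0 ∧ (v - w) * x.imI = 0 ∧ (v - w) * x.imJ = 0 ∧ (v - w) * x.imK = 0 := by
  have hrep := sub_mul_quaternionRep_eq_zero hv hw
  simp only [quaternionRep_apply, Fin.forall_fin_two, Matrix.of_apply, Matrix.cons_val_zero,
    Matrix.cons_val_one, Matrix.cons_val'] at hrep
  obtain ⟨⟨h00, h01⟩, h10, h11⟩ := hrep
  simp only [← h2.mul_right_eq_zero (b := (v - w) * _)]
  refine ⟨?_, ?_, ?_, ?_⟩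
  · linear_combination h00 + h11
  · linear_combination h10 - h01
  · linear_combination a * (h11 - h00) - b * (h01 + h10) + 2 * (v - w) * x.imJ * h
  · linear_combination b * (h00 - h11) - a * (h01 + h10) + 2 * (v - w) * x.imK * h

lemma normSq_intCast_eq_zero_of_mem {h : a ^ 2 + b ^ 2 = -1} {v : R} {x : ℍ[ℤ]}
    (hx : x ∈ annihilatorIdeal h v) : ((normSq x : ℤ) : R) = 0 := by
  have hstar : ((normSq x : ℤ) : ℍ[ℤ]) ∈ annihilatorIdeal h v := by
    have := Ideal.mul_mem_left _ (star x) hx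
    rwa [star_mul_self] at this
  exact intCast_mem_annihilatorIdeal.mp hstar

lemma mem_annihilatorIdeal_of_smul_mem {h : a ^ 2 + b ^ 2 = -1} {v : R} {k : ℤ}
    (hk : IsUnit (k : R)) {x : ℍ[ℤ]} (hx : k • x ∈ annihilatorIdeal h v) :
    x ∈ annihilatorIdeal h v := by
  rw [mem_annihilatorIdeal, map_zsmul, Matrix.smul_mulVec, ← Int.cast_smul_eq_zsmul R] at hx
  exact hk.smul_eq_zero.mp hx

lemma normSq_eq_mul_of_star_mul_eq_smul {k : ℤ} (hk : k ≠ 0) {w x y : ℍ[ℤ]} (hw : normSq w = k)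
    (hwx : star w * x = k • y) : normSq x = k * normSq y := by
  have hnorm := congrArg normSq hwx
  rw [map_mul, normSq_smul, normSq_star, hw, sq, mul_assoc] at hnorm
  exact mul_left_cancel₀ hk hnorm

/-- The Lipschitz quaternion `p + q i + r j + s k`. -/
@[simps] def lipschitz (p q r s : ℤ) : ℍ[ℤ] where
  re := p
  imI := q
  imJ := r
  imK := s

lemma normSq_lipschitz (p q r s : ℤ) :
    normSq (lipschitz p q r s) = p ^ 2 + q ^ 2 + r ^ 2 + s ^ 2 := by
  simp [normSq_def']

lemma exists_star_mul_eq_two_smul {x : ℍ[ℤ]} (hx : Even (normSq x)) :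
    ∃ w y : ℍ[ℤ], normSq w = 2 ∧ star w * x = (2 : ℤ) • y := by
  have hparity : (Even (x.re + x.imI) ∧ Even (x.imJ + x.imK)) ∨
      (Even (x.re + x.imJ) ∧ Even (x.imI + x.imK)) ∨
      (Even (x.re + x.imK) ∧ Even (x.imI + x.imJ)) := by
    rw [normSq_def'] at hx
    simp only [Int.even_add, Int.even_pow' two_ne_zero] at hx ⊢
    tauto
  rcases hparity with ⟨⟨u, hu⟩, v, hv⟩ | ⟨⟨u, hu⟩, v, hv⟩ | ⟨⟨u, hu⟩, v, hv⟩
  · refine ⟨lipschitz 1 1 0 0, lipschitz u (u - x.re) v (v - x.imJ), by simp [normSq_lipschitz], ?_⟩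
    ext <;> simp [-zsmul_eq_mul] <;> linarith
  · refine ⟨lipschitz 1 0 1 0, lipschitz u (x.imI - v) (u - x.re) v, by simp [normSq_lipschitz], ?_⟩
    ext <;> simp [-zsmul_eq_mul] <;> linarith
  · refine ⟨lipschitz 1 0 0 1, lipschitz u v (v - x.imI) (u - x.re), by simp [normSq_lipschitz], ?_⟩
    ext <;> simp [-zsmul_eq_mul] <;> linarith

lemma exists_sq_sub_three_mul_eq_zero_or_one (z : ℤ) :
    ∃ u, (z - 3 * u) ^ 2 = 0 ∨ (z - 3 * u) ^ 2 = 1 := by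
  obtain h | h | h : z % 3 = 0 ∨ z % 3 = 1 ∨ z % 3 = 2 := by omega
  · exact ⟨z / 3, .inl (by rw [show z - 3 * (z / 3) = 0 by omega]; rfl)⟩
  · exact ⟨z / 3, .inr (by rw [show z - 3 * (z / 3) = 1 by omega]; rfl)⟩
  · exact ⟨z / 3 + 1, .inr (by rw [show z - 3 * (z / 3 + 1) = -1 by omega]; rfl)⟩

lemma exists_star_mul_eq_three_smul {x : ℍ[ℤ]} (h3 : 3 ∣ normSq x) (h9 : ¬ 9 ∣ normSq x) :
    ∃ w y : ℍ[ℤ], normSq w = 3 ∧ star w * x = (3 : ℤ) • y := by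
  obtain ⟨u₀, h₀⟩ := exists_sq_sub_three_mul_eq_zero_or_one x.re
  obtain ⟨u₁, h₁⟩ := exists_sq_sub_three_mul_eq_zero_or_one x.imI
  obtain ⟨u₂, h₂⟩ := exists_sq_sub_three_mul_eq_zero_or_one x.imJ
  obtain ⟨u₃, h₃⟩ := exists_sq_sub_three_mul_eq_zero_or_one x.imK
  obtain ⟨n, hn : normSq x = 3 * n⟩ := h3
  let u : ℍ[ℤ] := lipschitz u₀ u₁ u₂ u₃
  have hw : normSq (x - (3 : ℤ) • u) =
      (x.re - 3 * u₀) ^ 2 + (x.imI - 3 * u₁) ^ 2 + (x.imJ - 3 * u₂) ^ 2 + (x.imK - 3 * u₃) ^ 2 := by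
    simp [normSq_def', u, -zsmul_eq_mul]
  have hw3 : normSq (x - (3 : ℤ) • u) = 3 * (n - 2 * (u₀ * x.re + u₁ * x.imI + u₂ * x.imJ +
      u₃ * x.imK) + 3 * normSq u) := by
    rw [hw, normSq_lipschitz]
    rw [normSq_def'] at hn
    linear_combination hn
  have hx0 : normSq (x - (3 : ℤ) • u) ≠ 0 := by
    intro h0
    have hx : x = (3 : ℤ) • u := sub_eq_zero.mp (normSq_eq_zero.mp h0)
    refine h9 ⟨normSq u, ?_⟩
    rw [hx, normSq_smul]
    rfl
  refine ⟨x - (3 : ℤ) • u, n - star u * x, by omega, ?_⟩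
  rw [star_sub, sub_mul, star_mul_self, hn, StarModule.star_smul, smul_mul_assoc]
  rw [Quaternion.coe_mul, coe_mul_eq_smul, smul_sub, star_trivial]
  rfl

lemma exists_mem_annihilatorIdeal_normSq_le {m : ℕ} [NeZero m] {a b : ZMod m}
    (h : a ^ 2 + b ^ 2 = -1) (v : ZMod m) :
    ∃ x ∈ annihilatorIdeal h v, 0 < normSq x ∧ normSq x ≤ 4 * m := by
  let ofBox (f : Fin 4 → Fin (Nat.sqrt m + 1)) : ℍ[ℤ] :=
    lipschitz (f 0 : ℕ) (f 1 : ℕ) (f 2 : ℕ) (f 3 : ℕ)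
  have hcard : Fintype.card (Fin 2 → ZMod m) < Fintype.card (Fin 4 → Fin (Nat.sqrt m + 1)) := by
    simp only [Fintype.card_fun, ZMod.card, Fintype.card_fin, pow_mul _ 2 2]
    exact Nat.pow_lt_pow_left (Nat.lt_succ_sqrt' m) two_ne_zero
  obtain ⟨f, g, hfg, heq⟩ := Fintype.exists_ne_map_eq_of_card_lt
    (fun f ↦ quaternionRep h (ofBox f) *ᵥ ![1, v]) hcard
  have hsq (i : Fin 4) : ((f i : ℕ) - (g i : ℕ) : ℤ) ^ 2 ≤ m := by
    have hsqrt : ((Nat.sqrt m : ℕ) : ℤ) ^ 2 ≤ m := by exact_mod_cast Nat.sqrt_le' m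
    exact (sq_le_sq' (by omega) (by omega)).trans hsqrt
  have hnorm : normSq (ofBox f - ofBox g) = ∑ i, ((f i : ℕ) - (g i : ℕ) : ℤ) ^ 2 := by
    simp [normSq_def', ofBox, Fin.sum_univ_four]
  refine ⟨ofBox f - ofBox g, ?_, ?_, ?_⟩
  · rw [mem_annihilatorIdeal, map_sub, Matrix.sub_mulVec, sub_eq_zero]
    exact heq
  · obtain ⟨i, hi⟩ := Function.ne_iff.mp hfg
    rw [hnorm]
    refine Finset.sum_pos' (fun _ _ ↦ sq_nonneg _)
      ⟨i, mem_univ i, sq_pos_of_ne_zero (sub_ne_zero.mpr ?_)⟩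
    exact_mod_cast Fin.val_ne_of_ne hi
  · rw [hnorm]
    exact (Finset.sum_le_sum fun i _ ↦ hsq i).trans_eq (by simp)

lemma exists_normSq_eq_of_star_mul_eq_smul {m k : ℤ} {h : a ^ 2 + b ^ 2 = -1} {v : R}
    (hk0 : k ≠ 0) (hk : IsUnit (k : R)) {w x y : ℍ[ℤ]} (hx : x ∈ annihilatorIdeal h v)
    (hw : normSq w = k) (hwx : star w * x = k • y) (hxm : normSq x = k * m) :
    ∃ y ∈ annihilatorIdeal h v, normSq y = m := by
  refine ⟨y, mem_annihilatorIdeal_of_smul_mem hk ?_, ?_⟩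
  · rw [← hwx]
    exact Ideal.mul_mem_left _ _ hx
  · exact mul_left_cancel₀ hk0 ((normSq_eq_mul_of_star_mul_eq_smul hk0 hw hwx).symm.trans hxm)

lemma exists_mem_annihilatorIdeal_normSq_eq {m : ℕ} (hm : m.Coprime 6) {a b : ZMod m}
    (h : a ^ 2 + b ^ 2 = -1) (v : ZMod m) :
    ∃ x ∈ annihilatorIdeal h v, normSq x = m := by
  have : NeZero m := ⟨by rintro rfl; simp at hm⟩
  have h2 : IsUnit ((2 : ℤ) : ZMod m) := by
    exact_mod_cast (ZMod.isUnit_iff_coprime 2 m).mpr (hm.symm.coprime_dvd_left (by norm_num))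
  have h3 : IsUnit ((3 : ℤ) : ZMod m) := by
    exact_mod_cast (ZMod.isUnit_iff_coprime 3 m).mpr (hm.symm.coprime_dvd_left (by norm_num))
  have halve {k : ℤ} (hk : ∃ x ∈ annihilatorIdeal h v, normSq x = 2 * k) :
      ∃ x ∈ annihilatorIdeal h v, normSq x = k := by
    obtain ⟨x, hx, hxk⟩ := hk
    obtain ⟨w, y, hw, hwx⟩ := exists_star_mul_eq_two_smul (x := x) (hxk ▸ even_two_mul k)
    exact exists_normSq_eq_of_star_mul_eq_smul two_ne_zero h2 hx hw hwx hxk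
  obtain ⟨x, hx, hpos, hle⟩ := exists_mem_annihilatorIdeal_normSq_le h v
  obtain ⟨k, hk⟩ := (ZMod.intCast_zmod_eq_zero_iff_dvd _ m).mp (normSq_intCast_eq_zero_of_mem hx)
  have hm0 : (0 : ℤ) < m := by exact_mod_cast NeZero.pos m
  have hk0 : 0 < k := by by_contra! hc; nlinarith
  have hk4 : k ≤ 4 := by by_contra! hc; nlinarith
  interval_cases k
  · exact ⟨x, hx, by linarith⟩
  · exact halve ⟨x, hx, by linarith⟩
  · have h9 : ¬ 9 ∣ normSq x := by
      have : ¬ 3 ∣ m := fun hdvd ↦ by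
        have := Nat.Coprime.eq_one_of_dvd (hm.coprime_dvd_right (by norm_num : 3 ∣ 6)).symm hdvd
        omega
      omega
    obtain ⟨w, y, hw, hwx⟩ := exists_star_mul_eq_three_smul (by omega) h9
    exact exists_normSq_eq_of_star_mul_eq_smul three_ne_zero h3 hx hw hwx (by linarith)
  · exact halve (halve ⟨x, hx, by linarith⟩)

lemma exists_eq_addOrderOf_smul {h : a ^ 2 + b ^ 2 = -1} (h2 : IsUnit (2 : R)) {v w : R} {x : ℍ[ℤ]}
    (hv : x ∈ annihilatorIdeal h v) (hw : x ∈ annihilatorIdeal h w) :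
    ∃ y : ℍ[ℤ], x = (addOrderOf (v - w) : ℤ) • y := by
  have hdvd {z : ℤ} (hz : (v - w) * z = 0) : (addOrderOf (v - w) : ℤ) ∣ z := by
    rwa [addOrderOf_dvd_iff_zsmul_eq_zero, zsmul_eq_mul, mul_comm]
  obtain ⟨h₀, h₁, h₂, h₃⟩ := sub_mul_intCast_eq_zero h2 hv hw
  obtain ⟨p, hp⟩ := hdvd h₀
  obtain ⟨q, hq⟩ := hdvd h₁
  obtain ⟨r, hr⟩ := hdvd h₂
  obtain ⟨s, hs⟩ := hdvd h₃
  exact ⟨lipschitz p q r s, by ext <;> simp [-zsmul_eq_mul, hp, hq, hr, hs]⟩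

lemma eq_of_mem_annihilatorIdeal_of_normSq_eq {m : ℕ} (hm : Odd m) {a b : ZMod m}
    {h : a ^ 2 + b ^ 2 = -1} {v w : ZMod m} {x : ℍ[ℤ]} (hx : normSq x = m)
    (hv : x ∈ annihilatorIdeal h v) (hw : x ∈ annihilatorIdeal h w) : v = w := by
  have h2 : IsUnit (2 : ZMod m) := by
    exact_mod_cast (ZMod.isUnit_iff_coprime 2 m).mpr (Nat.coprime_two_left.mpr hm)
  obtain ⟨y, hy⟩ := exists_eq_addOrderOf_smul h2 hv hw
  set e := addOrderOf (v - w)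
  have hmul : (e : ℤ) * (e * normSq y) = m := by
    rw [← hx, hy, normSq_smul, sq, mul_assoc]
  have hmem : ((e * normSq y : ℤ) : ℍ[ℤ]) ∈ annihilatorIdeal h v := by
    have hmem := Ideal.mul_mem_left _ (star y) hv
    rw [hy, mul_smul_comm, star_mul_self, zsmul_eq_mul] at hmem
    rw [Int.cast_mul]
    exact hmem
  obtain ⟨r, hr⟩ := (ZMod.intCast_zmod_eq_zero_iff_dvd _ m).mp
    (intCast_mem_annihilatorIdeal.mp hmem)
  have her : (e : ℤ) * r = 1 := by
    have hm0 : (m : ℤ) ≠ 0 := by exact_mod_cast hm.pos.ne'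
    refine mul_left_cancel₀ hm0 ?_
    linear_combination hmul - e * hr
  have he : e = 1 := Nat.dvd_one.mp (Int.natCast_dvd_natCast.mp ⟨r, by exact_mod_cast her.symm⟩)
  exact sub_eq_zero.mp (AddMonoid.addOrderOf_eq_one_iff.mp he)

lemma le_sphereCount_four {m : ℕ} (hm : m.Coprime 6) : m ≤ sphereCount 4 m := by
  have hodd : Odd m := Nat.coprime_two_right.mp (hm.coprime_dvd_right (by norm_num))
  have : NeZero m := ⟨hodd.pos.ne'⟩
  obtain ⟨a, b, h⟩ := exists_sq_add_sq_eq_neg_one hodd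
  choose x hx hnorm using exists_mem_annihilatorIdeal_normSq_eq hm h
  let coords (v : ZMod m) : Fin 4 → ℤ := QuaternionAlgebra.equivTuple _ _ _ (x v)
  have hsphere (v : ZMod m) : coords v ∈ latticeSphere 4 m := by
    rw [mem_latticeSphere, ← hnorm v, normSq_def', Fin.sum_univ_four]
    rfl
  have hinj : Function.Injective coords := fun v w hvw ↦ by
    have hxvw : x v = x w := (QuaternionAlgebra.equivTuple _ _ _).injective hvw
    exact eq_of_mem_annihilatorIdeal_of_normSq_eq hodd (hnorm v) (hx v) (hxvw ▸ hx w)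
  calc m = #(univ : Finset (ZMod m)) := by rw [card_univ, ZMod.card]
    _ ≤ #(latticeSphere 4 m) :=
      card_le_card_of_injOn coords (fun v _ ↦ hsphere v) hinj.injOn
    _ = sphereCount 4 m := card_latticeSphere 4 m

end FourSquares

section LowerBound

lemma sum_sphereCount_sub_sq_le (n : ℕ) {lam : ℕ} {T : Finset ℕ} (hT : ∀ m ∈ T, m ^ 2 ≤ lam) :
    ∑ m ∈ T, sphereCount n (lam - m ^ 2) ≤ sphereCount (n + 1) lam := by
  simp only [← card_latticeSphere]
  rw [← card_sigma]
  refine card_le_card_of_injOn (fun p ↦ Fin.cons (p.1 : ℤ) p.2) ?_ ?_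
  · rintro ⟨m, x⟩ hmx
    obtain ⟨hm, hx⟩ := mem_sigma.mp hmx
    have hlam : ((lam - m ^ 2 : ℕ) : ℤ) = lam - m ^ 2 := by push_cast [hT m hm]; rfl
    rw [mem_latticeSphere, hlam] at hx
    rw [mem_coe, mem_latticeSphere, Fin.sum_univ_succ]
    simp only [Fin.cons_zero, Fin.cons_succ, hx]
    ring
  · rintro ⟨m, x⟩ - ⟨m', x'⟩ - heq
    obtain ⟨hm, rfl⟩ := Fin.cons_injective2 heq
    obtain rfl : m = m' := by exact_mod_cast hm
    rfl

lemma sphereCount_five_pos (lam : ℕ) : 0 < sphereCount 5 lam := by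
  obtain ⟨a, b, c, d, habcd⟩ := Nat.sum_four_squares lam
  rw [← card_latticeSphere, card_pos]
  refine ⟨![a, b, c, d, 0], mem_latticeSphere.mpr ?_⟩
  simp only [Fin.sum_univ_five, ← habcd]
  simp

lemma exists_coprime_six_sub_sq (lam : ℕ) :
    ∃ ρ < 6, ∀ j, (6 * j + ρ) ^ 2 ≤ lam → (lam - (6 * j + ρ) ^ 2).Coprime 6 := by
  have hcop {k : ℤ} {a : ℕ} (ha : (a : ℤ) = k) (h2 : k % 2 = 1) (h3 : k % 3 ≠ 0) :
      a.Coprime 6 := by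
    rw [show 6 = 2 * 3 from rfl, Nat.coprime_mul_iff_right, Nat.coprime_two_right,
      Nat.coprime_comm, Nat.Prime.coprime_iff_not_dvd Nat.prime_three, Nat.odd_iff]
    omega
  obtain ⟨ρ, hρ, h2, h3⟩ : ∃ ρ < 6, (lam + ρ) % 2 = 1 ∧ (lam + 2 * ρ ^ 2) % 3 ≠ 0 := by
    have := Nat.mod_lt lam (show 0 < 6 by norm_num)
    obtain h | h | h | h | h | h : lam % 6 = 0 ∨ lam % 6 = 1 ∨ lam % 6 = 2 ∨ lam % 6 = 3 ∨
      lam % 6 = 4 ∨ lam % 6 = 5 := by omega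
    exacts [⟨1, by omega⟩, ⟨0, by omega⟩, ⟨3, by omega⟩, ⟨2, by omega⟩, ⟨3, by omega⟩,
      ⟨0, by omega⟩]
  refine ⟨ρ, hρ, fun j hj ↦ ?_⟩
  refine hcop (k := lam - (6 * j + ρ) ^ 2) (by push_cast [hj]; rfl) ?_ ?_
  · interval_cases ρ <;> ring_nf <;> omega
  · interval_cases ρ <;> ring_nf <;> omega

lemma sqrt_pow_three_le_sphereCount_five (lam : ℕ) :
    Nat.sqrt lam ^ 3 ≤ 1728 * sphereCount 5 lam := by
  set N := Nat.sqrt lam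
  rcases lt_or_ge N 12 with hsmall | hlarge
  · calc N ^ 3 ≤ 12 ^ 3 := by gcongr
      _ ≤ 1728 * sphereCount 5 lam := Nat.le_mul_of_pos_right _ (sphereCount_five_pos lam)
  have hNlam : N ^ 2 ≤ lam := Nat.sqrt_le' lam
  obtain ⟨ρ, hρ, hcop⟩ := exists_coprime_six_sub_sq lam
  let T := (range (N / 12)).image (6 * · + ρ)
  have hT : ∀ m ∈ T, 2 * m ≤ N := by
    simp only [T, mem_image, mem_range, forall_exists_index, and_imp]
    omega
  have hTlam : ∀ m ∈ T, 4 * m ^ 2 ≤ N ^ 2 := fun m hm ↦ by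
    have := Nat.pow_le_pow_left (hT m hm) 2
    rwa [mul_pow] at this
  have hterm : ∀ m ∈ T, N ^ 2 ≤ 2 * sphereCount 4 (lam - m ^ 2) := fun m hm ↦ by
    obtain ⟨j, -, rfl⟩ := mem_image.mp hm
    have hm' := hTlam _ hm
    have := le_sphereCount_four (hcop j (by omega))
    omega
  have hcard : #T = N / 12 := by
    rw [card_image_of_injective _ (fun a b h ↦ by simpa using h), card_range]
  have hsum : N / 12 * N ^ 2 ≤ 2 * sphereCount 5 lam :=
    calc N / 12 * N ^ 2 = ∑ _m ∈ T, N ^ 2 := by rw [sum_const, hcard, smul_eq_mul]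
      _ ≤ ∑ m ∈ T, 2 * sphereCount 4 (lam - m ^ 2) := sum_le_sum hterm
      _ = 2 * ∑ m ∈ T, sphereCount 4 (lam - m ^ 2) := (mul_sum ..).symm
      _ ≤ 2 * sphereCount 5 lam := by
        gcongr
        exact sum_sphereCount_sub_sq_le 4 fun m hm ↦ by have := hTlam m hm; omega
  calc N ^ 3 = N * N ^ 2 := by ring
    _ ≤ 24 * (N / 12) * N ^ 2 := by gcongr; omega
    _ ≤ 1728 * sphereCount 5 lam := by linarith

lemma exists_sqrt_pow_le_sphereCount (k : ℕ) :
    ∃ C : ℕ, ∀ lam, Nat.sqrt lam ^ (k + 3) ≤ C * sphereCount (k + 5) lam := by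
  induction k with
  | zero => exact ⟨1728, sqrt_pow_three_le_sphereCount_five⟩
  | succ k ih =>
    obtain ⟨C, hC⟩ := ih
    refine ⟨2 * 2 ^ (k + 3) * C, fun lam ↦ ?_⟩
    set N := Nat.sqrt lam
    have hNlam : N ^ 2 ≤ lam := Nat.sqrt_le' lam
    have hhalf : ∀ m ∈ range (N / 2 + 1), 2 * m ≤ N := fun m hm ↦ by
      have := mem_range.mp hm
      omega
    have hterm : ∀ m ∈ range (N / 2 + 1),
        N ^ (k + 3) ≤ 2 ^ (k + 3) * (C * sphereCount (k + 5) (lam - m ^ 2)) := fun m hm ↦ by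
      have hm' := hhalf m hm
      have hsqrt : N - m ≤ Nat.sqrt (lam - m ^ 2) := by
        rw [Nat.le_sqrt']
        zify [show m ≤ N by omega, show m ^ 2 ≤ lam by nlinarith]
        zify at hNlam hm'
        nlinarith
      calc N ^ (k + 3) ≤ (2 * Nat.sqrt (lam - m ^ 2)) ^ (k + 3) := by gcongr; omega
        _ = 2 ^ (k + 3) * Nat.sqrt (lam - m ^ 2) ^ (k + 3) := mul_pow ..
        _ ≤ _ := by gcongr; exact hC _
    calc N ^ (k + 1 + 3) = N * N ^ (k + 3) := by ring
      _ ≤ 2 * (N / 2 + 1) * N ^ (k + 3) := by gcongr; omega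
      _ = 2 * ∑ _m ∈ range (N / 2 + 1), N ^ (k + 3) := by simp [mul_assoc]
      _ ≤ 2 * ∑ m ∈ range (N / 2 + 1),
          2 ^ (k + 3) * (C * sphereCount (k + 5) (lam - m ^ 2)) := by
        gcongr with m hm
        exact hterm m hm
      _ = 2 * 2 ^ (k + 3) * C * ∑ m ∈ range (N / 2 + 1), sphereCount (k + 5) (lam - m ^ 2) := by
        rw [← mul_sum, ← mul_sum]
        ring
      _ ≤ 2 * 2 ^ (k + 3) * C * sphereCount (k + 5 + 1) lam := by
        gcongr
        exact sum_sphereCount_sub_sq_le _ fun m hm ↦ by have := hhalf m hm; nlinarith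

end LowerBound

section DivisorKernel

lemma sum_Icc_rpow_neg_le_tsum {s : ℝ} (hs : 1 < s) (M : ℕ) :
    ∑ c ∈ Icc 1 M, (c : ℝ) ^ (-s) ≤ ∑' c : ℕ, (c : ℝ) ^ (-s) :=
  (Real.summable_nat_rpow.mpr (by linarith)).sum_le_tsum _ fun c _ ↦ by positivity

/-- The kernel `κ_M(m, k) = ∑ c^(-1/2)` over the divisors `c ≤ M` of `m² - k²`, which bounds the
off-diagonal terms of the exponential sum against the major arc weights. -/
def divisorKernel (M : ℕ) (m k : ℤ) : ℝ :=
  ∑ c ∈ Icc 1 M with ((c : ℕ) : ℤ) ∣ m ^ 2 - k ^ 2, (c : ℝ) ^ (-(1 / 2) : ℝ)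

lemma divisorKernel_nonneg (M : ℕ) (m k : ℤ) : 0 ≤ divisorKernel M m k :=
  sum_nonneg fun c _ ↦ by positivity

lemma divisorKernel_comm (M : ℕ) (m k : ℤ) : divisorKernel M m k = divisorKernel M k m := by
  simp only [divisorKernel, dvd_sub_comm]

lemma sum_rpow_neg_half_le {S : Finset ℕ} (hS : ∀ c ∈ S, 0 < c) :
    ∑ c ∈ S, (c : ℝ) ^ (-(1 / 2) : ℝ) ≤ (∑ c ∈ S, (c : ℝ) ^ (-(1 / 8) : ℝ)) ^ (2 / 3 : ℝ) *
      (∑ c ∈ S, (c : ℝ) ^ (-(5 / 4) : ℝ)) ^ (1 / 3 : ℝ) := by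
  have hconj : (3 / 2 : ℝ).HolderConjugate 3 := by
    rw [Real.holderConjugate_iff]
    norm_num
  have hholder := Real.inner_le_Lp_mul_Lq_of_nonneg S hconj
    (f := fun c ↦ (c : ℝ) ^ (-(1 / 12) : ℝ)) (g := fun c ↦ (c : ℝ) ^ (-(5 / 12) : ℝ))
    (fun c _ ↦ by positivity) (fun c _ ↦ by positivity)
  have hmul : ∀ c ∈ S, (c : ℝ) ^ (-(1 / 12) : ℝ) * (c : ℝ) ^ (-(5 / 12) : ℝ) =
      (c : ℝ) ^ (-(1 / 2) : ℝ) := fun c hc ↦ by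
    rw [← Real.rpow_add (Nat.cast_pos.mpr (hS c hc))]
    norm_num
  rw [sum_congr rfl hmul] at hholder
  simp only [← Real.rpow_mul (Nat.cast_nonneg _)] at hholder
  norm_num at hholder ⊢
  exact hholder

lemma divisorKernel_rpow_le (M : ℕ) (m k : ℤ) :
    divisorKernel M m k ^ (3 / 2 : ℝ) ≤ (∑' c : ℕ, (c : ℝ) ^ (-(5 / 4) : ℝ)) ^ (1 / 2 : ℝ) *
      ∑ c ∈ Icc 1 M with ((c : ℕ) : ℤ) ∣ m ^ 2 - k ^ 2, (c : ℝ) ^ (-(1 / 8) : ℝ) := by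
  set S := {c ∈ Icc 1 M | ((c : ℕ) : ℤ) ∣ m ^ 2 - k ^ 2}
  have hpos : ∀ c ∈ S, 0 < c := fun c hc ↦ (mem_Icc.mp (mem_filter.mp hc).1).1
  have hsum : ∑ c ∈ S, (c : ℝ) ^ (-(5 / 4) : ℝ) ≤ ∑' c : ℕ, (c : ℝ) ^ (-(5 / 4) : ℝ) :=
    (sum_le_sum_of_subset_of_nonneg (filter_subset _ _) fun c _ _ ↦ by positivity).trans
      (sum_Icc_rpow_neg_le_tsum (by norm_num) M)
  have hnonneg (s : ℝ) : 0 ≤ ∑ c ∈ S, (c : ℝ) ^ s := sum_nonneg fun c _ ↦ by positivity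
  calc divisorKernel M m k ^ (3 / 2 : ℝ)
      ≤ ((∑ c ∈ S, (c : ℝ) ^ (-(1 / 8) : ℝ)) ^ (2 / 3 : ℝ) *
        (∑ c ∈ S, (c : ℝ) ^ (-(5 / 4) : ℝ)) ^ (1 / 3 : ℝ)) ^ (3 / 2 : ℝ) := by
        gcongr
        · exact divisorKernel_nonneg M m k
        · exact sum_rpow_neg_half_le hpos
    _ = (∑ c ∈ S, (c : ℝ) ^ (-(5 / 4) : ℝ)) ^ (1 / 2 : ℝ) *
        ∑ c ∈ S, (c : ℝ) ^ (-(1 / 8) : ℝ) := by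
      rw [Real.mul_rpow (by have := hnonneg (-(1 / 8)); positivity)
        (by have := hnonneg (-(5 / 4)); positivity), ← Real.rpow_mul (hnonneg _),
        ← Real.rpow_mul (hnonneg _), mul_comm]
      norm_num
    _ ≤ _ := by gcongr

lemma card_mul_le_of_pairwise_dvd_sub {N L : ℕ} (hL : 0 < L) (hLN : L ≤ 2 * N) {S : Finset ℤ}
    (hS : S ⊆ Icc (-(N : ℤ)) N) (hdvd : ∀ k ∈ S, ∀ l ∈ S, (L : ℤ) ∣ k - l) :
    #S * L ≤ 4 * N := by
  have hLpos : (0 : ℤ) < L := by exact_mod_cast hL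
  have hmaps : Set.MapsTo (fun k : ℤ ↦ (k + N) / L) S (Icc 0 (2 * N / L : ℤ)) := fun k hk ↦ by
    have hkN := mem_Icc.mp (hS hk)
    rw [coe_Icc, Set.mem_Icc]
    exact ⟨Int.ediv_nonneg (by omega) hLpos.le, Int.ediv_le_ediv hLpos (by omega)⟩
  have hinj : Set.InjOn (fun k : ℤ ↦ (k + N) / L) S := fun k hk l hl hkl ↦ by
    have hmod : (k + N) % L = (l + N) % L :=
      Int.emod_eq_emod_iff_emod_sub_eq_zero.mpr <| Int.emod_eq_zero_of_dvd <| by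
        simpa using hdvd k hk l hl
    have hk := Int.mul_ediv_add_emod (k + N) L
    have hl := Int.mul_ediv_add_emod (l + N) L
    simp only at hkl
    rw [hkl, hmod] at hk
    linarith
  have hcard : #S ≤ 2 * N / L + 1 := by
    have h := card_le_card_of_injOn _ hmaps hinj
    rw [Int.card_Icc, sub_zero] at h
    exact_mod_cast h
  calc #S * L ≤ (2 * N / L + 1) * L := Nat.mul_le_mul_right L hcard
    _ ≤ 2 * N + L := by
      rw [add_mul, one_mul]
      exact Nat.add_le_add_right (Nat.div_mul_le_self _ _) L
    _ ≤ 4 * N := by omega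

lemma card_filter_dvd_sub_dvd_add_le {N e f : ℕ} (he : 0 < e) (hf : 0 < f) (hef : e * f ≤ 2 * N)
    (m : ℤ) : (#{k ∈ Icc (-(N : ℤ)) N | (e : ℤ) ∣ m - k ∧ (f : ℤ) ∣ m + k} : ℝ) ≤
      4 * N * (e.gcd f / (e * f)) := by
  set S := {k ∈ Icc (-(N : ℤ)) N | (e : ℤ) ∣ m - k ∧ (f : ℤ) ∣ m + k}
  have hlcm_dvd : ∀ k ∈ S, ∀ l ∈ S, ((e.lcm f : ℕ) : ℤ) ∣ k - l := fun k hk l hl ↦ by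
    obtain ⟨-, hke, hkf⟩ := mem_filter.mp hk
    obtain ⟨-, hle, hlf⟩ := mem_filter.mp hl
    have hesub : (e : ℤ) ∣ k - l := by simpa using dvd_sub hle hke
    have hfsub : (f : ℤ) ∣ k - l := by simpa using dvd_sub hkf hlf
    exact Int.coe_lcm_dvd hesub hfsub
  have hbound : (#S * e.lcm f : ℝ) ≤ 4 * N := by
    exact_mod_cast card_mul_le_of_pairwise_dvd_sub (Nat.lcm_pos he hf)
      ((Nat.le_of_dvd (mul_pos he hf) (Nat.lcm_dvd_mul e f)).trans hef) (filter_subset _ _) hlcm_dvd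
  have hlcm : (0 : ℝ) < e.lcm f := by exact_mod_cast Nat.lcm_pos he hf
  have hgpos : (0 : ℝ) < e.gcd f := by exact_mod_cast Nat.gcd_pos_of_pos_left f he
  have hgcd : (e.gcd f * e.lcm f : ℝ) = e * f := by exact_mod_cast Nat.gcd_mul_lcm e f
  rwa [← hgcd, div_mul_cancel_left₀ hgpos.ne', ← div_eq_mul_inv, le_div_iff₀ hlcm]

lemma gcd_mul_rpow_neg_eq {a : ℕ} (b : ℕ) (ha : 0 < a) :
    (a.gcd b : ℝ) * (a * b : ℝ) ^ (-(9 / 8) : ℝ) = (a.gcd b : ℝ) ^ (-(5 / 4) : ℝ) *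
      (((a / a.gcd b : ℕ) : ℝ) ^ (-(9 / 8) : ℝ) * ((b / a.gcd b : ℕ) : ℝ) ^ (-(9 / 8) : ℝ)) := by
  have hg : (0 : ℝ) < a.gcd b := Nat.cast_pos.mpr (Nat.gcd_pos_of_pos_left b ha)
  have ha' := Nat.mul_div_cancel' (Nat.gcd_dvd_left a b)
  have hb' := Nat.mul_div_cancel' (Nat.gcd_dvd_right a b)
  generalize a.gcd b = g at *
  generalize a / g = a', b / g = b' at *
  subst ha' hb'
  have hsplit : ((g * a' : ℕ) * (g * b' : ℕ) : ℝ) = g ^ (2 : ℝ) * (a' * b') := by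
    push_cast
    rw [Real.rpow_two]
    ring
  have hexp : (g : ℝ) * (g : ℝ) ^ (2 * (-(9 / 8)) : ℝ) = (g : ℝ) ^ (-(5 / 4) : ℝ) := by
    rw [← Real.rpow_one_add' hg.le (by norm_num)]
    norm_num
  rw [hsplit, Real.mul_rpow (by positivity) (by positivity),
    Real.mul_rpow (by positivity) (by positivity), ← Real.rpow_mul hg.le, ← mul_assoc, hexp]

lemma sum_gcd_mul_rpow_neg_le (M : ℕ) :
    ∑ p ∈ Icc 1 M ×ˢ Icc 1 M, (p.1.gcd p.2 : ℝ) * (p.1 * p.2 : ℝ) ^ (-(9 / 8) : ℝ) ≤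
      (∑' c : ℕ, (c : ℝ) ^ (-(5 / 4) : ℝ)) * (∑' c : ℕ, (c : ℝ) ^ (-(9 / 8) : ℝ)) ^ 2 := by
  let split (p : ℕ × ℕ) : ℕ × ℕ × ℕ := (p.1.gcd p.2, p.1 / p.1.gcd p.2, p.2 / p.1.gcd p.2)
  let term (q : ℕ × ℕ × ℕ) : ℝ :=
    (q.1 : ℝ) ^ (-(5 / 4) : ℝ) * ((q.2.1 : ℝ) ^ (-(9 / 8) : ℝ) * (q.2.2 : ℝ) ^ (-(9 / 8) : ℝ))
  have hdecomp (p : ℕ × ℕ) : p.1.gcd p.2 * (p.1 / p.1.gcd p.2) = p.1 ∧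
      p.1.gcd p.2 * (p.2 / p.1.gcd p.2) = p.2 :=
    ⟨Nat.mul_div_cancel' (Nat.gcd_dvd_left _ _), Nat.mul_div_cancel' (Nat.gcd_dvd_right _ _)⟩
  have hinj : Set.InjOn split (Icc 1 M ×ˢ Icc 1 M : Finset (ℕ × ℕ)) := fun p _ q _ hpq ↦ by
    simp only [split, Prod.mk.injEq] at hpq
    obtain ⟨hg, h1, h2⟩ := hpq
    exact Prod.ext (by rw [← (hdecomp p).1, ← (hdecomp q).1, h1, hg])
      (by rw [← (hdecomp p).2, ← (hdecomp q).2, h2, hg])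
  have hmaps : (Icc 1 M ×ˢ Icc 1 M).image split ⊆ Icc 1 M ×ˢ Icc 1 M ×ˢ Icc 1 M := by
    rw [image_subset_iff]
    intro p hp
    simp only [mem_product, mem_Icc] at hp ⊢
    have hg : 0 < p.1.gcd p.2 := Nat.gcd_pos_of_pos_left _ hp.1.1
    have hg1 := Nat.le_of_dvd hp.1.1 (Nat.gcd_dvd_left p.1 p.2)
    have hg2 := Nat.le_of_dvd hp.2.1 (Nat.gcd_dvd_right p.1 p.2)
    exact ⟨⟨hg, hg1.trans hp.1.2⟩, ⟨Nat.div_pos hg1 hg, (Nat.div_le_self _ _).trans hp.1.2⟩,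
      Nat.div_pos hg2 hg, (Nat.div_le_self _ _).trans hp.2.2⟩
  have hterm : ∀ p ∈ Icc 1 M ×ˢ Icc 1 M,
      (p.1.gcd p.2 : ℝ) * (p.1 * p.2 : ℝ) ^ (-(9 / 8) : ℝ) = term (split p) := fun p hp ↦
    gcd_mul_rpow_neg_eq p.2 (mem_Icc.mp (mem_product.mp hp).1).1
  calc ∑ p ∈ Icc 1 M ×ˢ Icc 1 M, (p.1.gcd p.2 : ℝ) * (p.1 * p.2 : ℝ) ^ (-(9 / 8) : ℝ)
      = ∑ q ∈ (Icc 1 M ×ˢ Icc 1 M).image split, term q := by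
        rw [sum_image hinj, sum_congr rfl hterm]
    _ ≤ ∑ q ∈ Icc 1 M ×ˢ Icc 1 M ×ˢ Icc 1 M, term q :=
      sum_le_sum_of_subset_of_nonneg hmaps fun q _ _ ↦ by positivity
    _ = (∑ g ∈ Icc 1 M, (g : ℝ) ^ (-(5 / 4) : ℝ)) *
        (∑ a ∈ Icc 1 M, (a : ℝ) ^ (-(9 / 8) : ℝ)) ^ 2 := by
      simp only [term]
      rw [sq, sum_mul_sum (Icc 1 M) (Icc 1 M), ← sum_product', sum_mul_sum, ← sum_product']
    _ ≤ _ := by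
      gcongr <;> exact sum_Icc_rpow_neg_le_tsum (by norm_num) M

lemma sum_filter_dvd_rpow_le_sum_pairs (M : ℕ) (m k : ℤ) :
    ∑ c ∈ Icc 1 M with ((c : ℕ) : ℤ) ∣ m ^ 2 - k ^ 2, (c : ℝ) ^ (-(1 / 8) : ℝ) ≤
      ∑ p ∈ Icc 1 M ×ˢ Icc 1 M with p.1 * p.2 ≤ M ∧ (p.1 : ℤ) ∣ m - k ∧ (p.2 : ℤ) ∣ m + k,
        (p.1 * p.2 : ℝ) ^ (-(1 / 8) : ℝ) := by
  set P := {p ∈ Icc 1 M ×ˢ Icc 1 M | p.1 * p.2 ≤ M ∧ (p.1 : ℤ) ∣ m - k ∧ (p.2 : ℤ) ∣ m + k}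
  let prod (p : ℕ × ℕ) : ℕ := p.1 * p.2
  -- A divisor `c` of `(m - k) * (m + k)` factors as `c = e * f` with `e ∣ m - k` and `f ∣ m + k`.
  have hfactor : {c ∈ Icc 1 M | ((c : ℕ) : ℤ) ∣ m ^ 2 - k ^ 2} ⊆ P.image prod := by
    intro c hc
    obtain ⟨hcM, hdvd⟩ := mem_filter.mp hc
    obtain ⟨hc1, hcM⟩ := mem_Icc.mp hcM
    have hmul : c ∣ (m - k).natAbs * (m + k).natAbs := by
      rw [← Int.natAbs_mul, ← Int.natCast_dvd, mul_comm, ← sq_sub_sq]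
      exact hdvd
    obtain ⟨e, f, he, hf, rfl⟩ := exists_dvd_and_dvd_of_dvd_mul hmul
    have he1 : 0 < e := Nat.pos_of_mul_pos_right hc1
    have hf1 : 0 < f := Nat.pos_of_mul_pos_left hc1
    refine mem_image.mpr ⟨(e, f), mem_filter.mpr ⟨mem_product.mpr ⟨?_, ?_⟩, hcM, ?_, ?_⟩, rfl⟩
    · exact mem_Icc.mpr ⟨he1, (Nat.le_mul_of_pos_right e hf1).trans hcM⟩
    · exact mem_Icc.mpr ⟨hf1, (Nat.le_mul_of_pos_left f he1).trans hcM⟩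
    · exact Int.natCast_dvd.mpr he
    · exact Int.natCast_dvd.mpr hf
  calc ∑ c ∈ Icc 1 M with ((c : ℕ) : ℤ) ∣ m ^ 2 - k ^ 2, (c : ℝ) ^ (-(1 / 8) : ℝ)
      ≤ ∑ c ∈ P.image prod, (c : ℝ) ^ (-(1 / 8) : ℝ) :=
        sum_le_sum_of_subset_of_nonneg hfactor fun c _ _ ↦ by positivity
    _ ≤ ∑ p ∈ P, ((p.1 * p.2 : ℕ) : ℝ) ^ (-(1 / 8) : ℝ) :=
      sum_image_le_of_nonneg fun c _ ↦ by positivity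
    _ = ∑ p ∈ P, (p.1 * p.2 : ℝ) ^ (-(1 / 8) : ℝ) := by
      simp only [Nat.cast_mul]

lemma sum_sum_filter_dvd_rpow_le (N : ℕ) (m : ℤ) :
    ∑ k ∈ Icc (-(N : ℤ)) N, ∑ c ∈ Icc 1 (2 * N) with ((c : ℕ) : ℤ) ∣ m ^ 2 - k ^ 2,
      (c : ℝ) ^ (-(1 / 8) : ℝ) ≤
    4 * N * ∑ p ∈ Icc 1 (2 * N) ×ˢ Icc 1 (2 * N),
      (p.1.gcd p.2 : ℝ) * (p.1 * p.2 : ℝ) ^ (-(9 / 8) : ℝ) := by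
  set B := Icc (-(N : ℤ)) N
  set P := Icc 1 (2 * N) ×ˢ Icc 1 (2 * N)
  have hcount : ∀ p ∈ P, ∑ k ∈ B, (if p.1 * p.2 ≤ 2 * N ∧ (p.1 : ℤ) ∣ m - k ∧ (p.2 : ℤ) ∣ m + k
      then (p.1 * p.2 : ℝ) ^ (-(1 / 8) : ℝ) else 0) ≤
      4 * N * ((p.1.gcd p.2 : ℝ) * (p.1 * p.2 : ℝ) ^ (-(9 / 8) : ℝ)) := fun p hp ↦ by
    obtain ⟨h1, h2⟩ := mem_product.mp hp
    have h1 := (mem_Icc.mp h1).1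
    have h2 := (mem_Icc.mp h2).1
    by_cases hM : p.1 * p.2 ≤ 2 * N
    · have hpos : (0 : ℝ) < p.1 * p.2 := by exact_mod_cast Nat.mul_pos h1 h2
      have hexp : (p.1 * p.2 : ℝ) ^ (-(9 / 8) : ℝ) =
          (p.1 * p.2 : ℝ) ^ (-(1 / 8) : ℝ) / (p.1 * p.2) := by
        rw [← Real.rpow_sub_one hpos.ne']
        norm_num
      simp only [hM, true_and]
      rw [← sum_filter, sum_const, nsmul_eq_mul, hexp]
      calc (#{k ∈ B | (p.1 : ℤ) ∣ m - k ∧ (p.2 : ℤ) ∣ m + k} : ℝ) *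
            (p.1 * p.2 : ℝ) ^ (-(1 / 8) : ℝ)
          ≤ 4 * N * (p.1.gcd p.2 / (p.1 * p.2)) * (p.1 * p.2 : ℝ) ^ (-(1 / 8) : ℝ) := by
            gcongr
            exact card_filter_dvd_sub_dvd_add_le h1 h2 hM m
        _ = _ := by ring
    · simp only [hM, false_and, if_false, sum_const_zero]
      positivity
  calc _ ≤ ∑ k ∈ B, ∑ p ∈ P, (if p.1 * p.2 ≤ 2 * N ∧ (p.1 : ℤ) ∣ m - k ∧ (p.2 : ℤ) ∣ m + k
        then (p.1 * p.2 : ℝ) ^ (-(1 / 8) : ℝ) else 0) := by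
        simp only [← sum_filter]
        exact sum_le_sum fun k _ ↦ sum_filter_dvd_rpow_le_sum_pairs (2 * N) m k
    _ ≤ _ := by
      rw [sum_comm, mul_sum]
      exact sum_le_sum hcount

lemma exists_sum_divisorKernel_rpow_le :
    ∃ K : ℝ, 0 ≤ K ∧ ∀ (N : ℕ) (m : ℤ),
      ∑ k ∈ Icc (-(N : ℤ)) N, divisorKernel (2 * N) m k ^ (3 / 2 : ℝ) ≤ K * N := by
  set Z := (∑' c : ℕ, (c : ℝ) ^ (-(5 / 4) : ℝ)) ^ (1 / 2 : ℝ)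
  set W := (∑' c : ℕ, (c : ℝ) ^ (-(5 / 4) : ℝ)) * (∑' c : ℕ, (c : ℝ) ^ (-(9 / 8) : ℝ)) ^ 2
  have hnonneg (s : ℝ) : 0 ≤ ∑' c : ℕ, (c : ℝ) ^ s := tsum_nonneg fun c ↦ by positivity
  have hZ : 0 ≤ Z := Real.rpow_nonneg (hnonneg _) _
  have hW : 0 ≤ W := mul_nonneg (hnonneg _) (pow_nonneg (hnonneg _) _)
  refine ⟨Z * (4 * W), mul_nonneg hZ (mul_nonneg zero_le_four hW), fun N m ↦ ?_⟩
  calc ∑ k ∈ Icc (-(N : ℤ)) N, divisorKernel (2 * N) m k ^ (3 / 2 : ℝ)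
      ≤ ∑ k ∈ Icc (-(N : ℤ)) N, Z * ∑ c ∈ Icc 1 (2 * N) with ((c : ℕ) : ℤ) ∣ m ^ 2 - k ^ 2,
          (c : ℝ) ^ (-(1 / 8) : ℝ) := sum_le_sum fun k _ ↦ divisorKernel_rpow_le _ m k
    _ ≤ Z * (4 * N * W) := by
      rw [← mul_sum]
      gcongr
      refine (sum_sum_filter_dvd_rpow_le N m).trans ?_
      gcongr
      exact sum_gcd_mul_rpow_neg_le (2 * N)
    _ = Z * (4 * W) * N := by ring

lemma mul_mul_le_rpow_three_halves {x y z : ℝ} (hx : 0 ≤ x) (hy : 0 ≤ y) (hz : 0 ≤ z) :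
    x * y * z ≤ (x ^ (3 / 2 : ℝ) * y ^ (3 / 2 : ℝ) + x ^ (3 / 2 : ℝ) * z ^ (3 / 2 : ℝ) +
      y ^ (3 / 2 : ℝ) * z ^ (3 / 2 : ℝ)) / 3 := by
  have hpow {t : ℝ} (ht : 0 ≤ t) : t ^ (3 / 2 : ℝ) = √t ^ 3 ∧ t = √t ^ 2 := by
    refine ⟨?_, (Real.sq_sqrt ht).symm⟩
    rw [Real.sqrt_eq_rpow, ← Real.rpow_mul_natCast ht]
    norm_num
  have hamgm {a b c : ℝ} (ha : 0 ≤ a) (hb : 0 ≤ b) (hc : 0 ≤ c) :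
      a * b * c ≤ (a ^ 3 + b ^ 3 + c ^ 3) / 3 := by
    nlinarith [mul_nonneg (add_nonneg (add_nonneg ha hb) hc)
      (add_nonneg (add_nonneg (sq_nonneg (a - b)) (sq_nonneg (b - c))) (sq_nonneg (a - c)))]
  rw [(hpow hx).1, (hpow hy).1, (hpow hz).1]
  calc x * y * z = (√x * √y) * (√x * √z) * (√y * √z) := by
        conv_lhs => rw [(hpow hx).2, (hpow hy).2, (hpow hz).2]
        ring
    _ ≤ ((√x * √y) ^ 3 + (√x * √z) ^ 3 + (√y * √z) ^ 3) / 3 :=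
      hamgm (by positivity) (by positivity) (by positivity)
    _ = _ := by ring

lemma exists_sum_mul_mul_divisorKernel_le :
    ∃ K : ℝ, 0 ≤ K ∧ ∀ (N : ℕ) (F : ℤ → ℝ), (∀ m, 0 ≤ F m) →
      ∑ m ∈ Icc (-(N : ℤ)) N, F m ^ (3 / 2 : ℝ) ≤ N →
      ∑ m ∈ Icc (-(N : ℤ)) N, ∑ k ∈ Icc (-(N : ℤ)) N, F m * F k * divisorKernel (2 * N) m k ≤
        K * N ^ 2 := by
  obtain ⟨K, hK0, hK⟩ := exists_sum_divisorKernel_rpow_le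
  refine ⟨1 + K, by positivity, fun N F hF0 hF ↦ ?_⟩
  set B := Icc (-(N : ℤ)) N
  set κ := divisorKernel (2 * N)
  set S := ∑ m ∈ B, F m ^ (3 / 2 : ℝ)
  have hS0 : 0 ≤ S := sum_nonneg fun m _ ↦ Real.rpow_nonneg (hF0 m) _
  have hmixed : ∑ m ∈ B, ∑ k ∈ B, F m ^ (3 / 2 : ℝ) * κ m k ^ (3 / 2 : ℝ) ≤ K * N ^ 2 := by
    calc _ ≤ ∑ m ∈ B, F m ^ (3 / 2 : ℝ) * (K * N) := by
          simp only [← mul_sum]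
          exact sum_le_sum fun m _ ↦
            mul_le_mul_of_nonneg_left (hK N m) (Real.rpow_nonneg (hF0 m) _)
      _ = S * (K * N) := (sum_mul _ _ _).symm
      _ ≤ N * (K * N) := by gcongr
      _ = K * N ^ 2 := by ring
  have hmixed' : ∑ m ∈ B, ∑ k ∈ B, F k ^ (3 / 2 : ℝ) * κ m k ^ (3 / 2 : ℝ) ≤ K * N ^ 2 := by
    rw [sum_comm]
    refine Eq.trans_le (sum_congr rfl fun m _ ↦ sum_congr rfl fun k _ ↦ ?_) hmixed
    rw [show κ k m = κ m k from divisorKernel_comm _ k m]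
  have hdiag : ∑ m ∈ B, ∑ k ∈ B, F m ^ (3 / 2 : ℝ) * F k ^ (3 / 2 : ℝ) ≤ N ^ 2 := by
    rw [← sum_mul_sum, ← sq]
    gcongr
  calc ∑ m ∈ B, ∑ k ∈ B, F m * F k * κ m k
      ≤ ∑ m ∈ B, ∑ k ∈ B, (F m ^ (3 / 2 : ℝ) * F k ^ (3 / 2 : ℝ) +
        F m ^ (3 / 2 : ℝ) * κ m k ^ (3 / 2 : ℝ) + F k ^ (3 / 2 : ℝ) * κ m k ^ (3 / 2 : ℝ)) / 3 :=
        sum_le_sum fun m _ ↦ sum_le_sum fun k _ ↦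
          mul_mul_le_rpow_three_halves (hF0 m) (hF0 k) (divisorKernel_nonneg _ m k)
    _ ≤ (N ^ 2 + K * N ^ 2 + K * N ^ 2) / 3 := by
      simp only [← sum_div, sum_add_distrib]
      gcongr
    _ ≤ (1 + K) * N ^ 2 := by
      have : 0 ≤ K * (N : ℝ) ^ 2 := by positivity
      have : 0 ≤ (N : ℝ) ^ 2 := by positivity
      linarith

end DivisorKernel

section ArcWeightIntegral

open Complex
open scoped Real ComplexConjugate

lemma continuous_norm_coe_unitAddCircle : Continuous fun u : ℝ ↦ ‖(u : UnitAddCircle)‖ :=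
  continuous_norm.comp (AddCircle.continuous_mk' 1)

lemma continuous_norm_add_rpow {δ : ℝ} (hδ : 0 < δ) (s : ℝ) :
    Continuous fun u : ℝ ↦ (‖(u : UnitAddCircle)‖ + δ) ^ s :=
  (continuous_norm_coe_unitAddCircle.add continuous_const).rpow_const fun _ ↦
    Or.inl (add_pos_of_nonneg_of_pos (norm_nonneg _) hδ).ne'

lemma continuous_arcWeight {y : ℝ} (hy : 0 < y) {c : ℕ} (hc : 1 ≤ c) :
    Continuous (arcWeight y c) := by
  have hcy : 0 < c * y := mul_pos (by exact_mod_cast hc) hy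
  exact (continuous_norm_add_rpow hcy _).comp (continuous_const.mul continuous_id)

lemma continuous_arcWeightSum {y : ℝ} (hy : 0 < y) (M : ℕ) : Continuous (arcWeightSum y M) :=
  continuous_finsetSum _ fun _ hc ↦ continuous_arcWeight hy (mem_Icc.mp hc).1

lemma periodic_arcWeight (y : ℝ) {c : ℕ} (hc : 1 ≤ c) :
    Function.Periodic (arcWeight y c) (c : ℝ)⁻¹ := fun t ↦ by
  have hc0 : (c : ℝ) ≠ 0 := by exact_mod_cast (Nat.pos_iff_ne_zero.mp hc)
  rw [arcWeight, arcWeight, arcDist, arcDist, mul_add, mul_inv_cancel₀ hc0,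
    AddCircle.coe_add_period]

lemma integral_eq_zero_of_quasiperiodic {F : ℝ → ℂ} {T a : ℝ} {ω : ℂ} (hF : Function.Periodic F T)
    (hω : ω ≠ 1) (hshift : ∀ t, F (t + a) = ω * F t) : ∫ t in (0 : ℝ)..T, F t = 0 := by
  have hfix : ω * ∫ t in (0 : ℝ)..T, F t = ∫ t in (0 : ℝ)..T, F t := by
    simp only [← intervalIntegral.integral_const_mul, ← hshift,
      intervalIntegral.integral_comp_add_right F]
    simpa [add_comm] using hF.intervalIntegral_add_eq a 0
  by_contra hne
  exact hω (mul_right_cancel₀ hne (hfix.trans (one_mul _).symm))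

lemma integral_arcWeight_mul_exp_eq_zero (y : ℝ) {c : ℕ} (hc : 1 ≤ c) {D : ℤ}
    (hD : ¬(c : ℤ) ∣ D) :
    ∫ t in (0 : ℝ)..2, cexp (π * I * D * t) * arcWeight y c t = 0 := by
  have hc0 : (c : ℂ) ≠ 0 := by exact_mod_cast (Nat.pos_iff_ne_zero.mp hc)
  have hper : Function.Periodic (fun t : ℝ ↦ cexp (π * I * D * t) * arcWeight y c t) 2 := fun t ↦ by
    have hw : arcWeight y c (t + 2) = arcWeight y c t := by
      have h := (periodic_arcWeight y hc).nat_mul (2 * c) t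
      have h2 : ((2 * c : ℕ) : ℝ) * (c : ℝ)⁻¹ = 2 := by
        have : (c : ℝ) ≠ 0 := by exact_mod_cast hc0
        push_cast
        field_simp
      rwa [h2] at h
    have harg : π * I * D * ((t + 2 : ℝ) : ℂ) = π * I * D * t + D * (2 * π * I) := by
      push_cast
      ring
    simp only [hw, harg, exp_add, exp_int_mul_two_pi_mul_I, mul_one]
  refine integral_eq_zero_of_quasiperiodic (a := (c : ℝ)⁻¹) (ω := cexp (π * I * D / c)) hper ?_ ?_
  · rw [Ne, exp_eq_one_iff]
    rintro ⟨n, hn⟩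
    have hpi : (π : ℂ) * I ≠ 0 := mul_ne_zero (ofReal_ne_zero.mpr Real.pi_ne_zero) I_ne_zero
    have hDc : (D : ℂ) = c * (2 * n) := by
      rw [div_eq_iff hc0] at hn
      refine mul_left_cancel₀ hpi (hn.trans ?_)
      ring
    exact hD ⟨2 * n, by exact_mod_cast hDc⟩
  · intro t
    rw [periodic_arcWeight y hc, ← mul_assoc, ← exp_add]
    congr 2
    push_cast
    field_simp
    ring

lemma integral_add_rpow_le {δ : ℝ} (hδ : 0 < δ) :
    ∫ u in (0 : ℝ)..1, (u + δ) ^ (-(3 / 2) : ℝ) ≤ 2 * δ ^ (-(1 / 2) : ℝ) := by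
  have hmem : (0 : ℝ) ∉ Set.uIcc (0 + δ) (1 + δ) := by
    rw [Set.uIcc_of_le (by linarith), Set.mem_Icc]
    exact fun h ↦ absurd h.1 (by linarith)
  have htail : 0 ≤ (1 + δ) ^ (-(1 / 2) : ℝ) := by positivity
  rw [intervalIntegral.integral_comp_add_right fun x ↦ x ^ (-(3 / 2) : ℝ),
    integral_rpow (Or.inr ⟨by norm_num, hmem⟩), zero_add]
  norm_num at htail ⊢
  linarith

lemma norm_add_rpow_le {δ u : ℝ} (hδ : 0 < δ) (hu : u ∈ Set.Icc (0 : ℝ) 1) {s : ℝ} (hs : s ≤ 0) :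
    (‖(u : UnitAddCircle)‖ + δ) ^ s ≤ (u + δ) ^ s + (1 - u + δ) ^ s := by
  obtain ⟨hu0, hu1⟩ := hu
  have hleft : 0 ≤ (u + δ) ^ s := by positivity
  have hright : 0 ≤ (1 - u + δ) ^ s := Real.rpow_nonneg (by linarith) _
  rw [UnitAddCircle.norm_eq]
  rcases le_or_gt (round u) 0 with hr | hr
  · have hr' : (round u : ℝ) ≤ 0 := by exact_mod_cast hr
    have hle : u + δ ≤ |u - round u| + δ := by linarith [le_abs_self (u - round u)]
    linarith [Real.rpow_le_rpow_of_nonpos (by linarith) hle hs]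
  · have hr' : (1 : ℝ) ≤ round u := by exact_mod_cast hr
    have hle : 1 - u + δ ≤ |u - round u| + δ := by linarith [neg_abs_le (u - round u)]
    linarith [Real.rpow_le_rpow_of_nonpos (by linarith) hle hs]

lemma integral_norm_add_rpow_le {δ : ℝ} (hδ : 0 < δ) :
    ∫ u in (0 : ℝ)..1, (‖(u : UnitAddCircle)‖ + δ) ^ (-(3 / 2) : ℝ) ≤ 4 * δ ^ (-(1 / 2) : ℝ) := by
  have hint : IntervalIntegrable (fun u : ℝ ↦ (u + δ) ^ (-(3 / 2) : ℝ)) volume 0 1 := by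
    refine ContinuousOn.intervalIntegrable <|
      ContinuousOn.rpow_const (by fun_prop) fun u hu ↦ Or.inl ?_
    rw [Set.uIcc_of_le zero_le_one] at hu
    linarith [hu.1]
  have hint' : IntervalIntegrable (fun u : ℝ ↦ (1 - u + δ) ^ (-(3 / 2) : ℝ)) volume 0 1 := by
    simpa using (hint.comp_sub_left 1).symm
  have hreflect : ∫ u in (0 : ℝ)..1, (1 - u + δ) ^ (-(3 / 2) : ℝ) =
      ∫ u in (0 : ℝ)..1, (u + δ) ^ (-(3 / 2) : ℝ) := by
    rw [intervalIntegral.integral_comp_sub_left fun x ↦ (x + δ) ^ (-(3 / 2) : ℝ)]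
    norm_num
  calc ∫ u in (0 : ℝ)..1, (‖(u : UnitAddCircle)‖ + δ) ^ (-(3 / 2) : ℝ)
      ≤ ∫ u in (0 : ℝ)..1, ((u + δ) ^ (-(3 / 2) : ℝ) + (1 - u + δ) ^ (-(3 / 2) : ℝ)) :=
        intervalIntegral.integral_mono_on zero_le_one
          ((continuous_norm_add_rpow hδ _).intervalIntegrable _ _) (hint.add hint')
          fun u hu ↦ norm_add_rpow_le hδ hu (by norm_num)
    _ ≤ 4 * δ ^ (-(1 / 2) : ℝ) := by
      rw [intervalIntegral.integral_add hint hint', hreflect]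
      linarith [integral_add_rpow_le hδ]

lemma integral_arcWeight_le {y : ℝ} (hy : 0 < y) {c : ℕ} (hc : 1 ≤ c) :
    ∫ t in (0 : ℝ)..2, arcWeight y c t ≤ 8 * (c * y) ^ (-(1 / 2) : ℝ) := by
  have hc0 : (0 : ℝ) < c := by exact_mod_cast hc
  set φ : ℝ → ℝ := fun u ↦ (‖(u : UnitAddCircle)‖ + c * y) ^ (-(3 / 2) : ℝ)
  have hφ : Continuous φ := continuous_norm_add_rpow (mul_pos hc0 hy) _
  have hper : Function.Periodic φ 1 := fun u ↦ by
    simp only [φ, AddCircle.coe_add_period]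
  have hperiods : ∫ u in (0 : ℝ)..c * 2, φ u = (2 * c) * ∫ u in (0 : ℝ)..1, φ u := by
    have h := hper.intervalIntegral_add_zsmul_eq (2 * c : ℤ) 0 hφ.intervalIntegrable
    simpa [mul_comm] using h
  calc ∫ t in (0 : ℝ)..2, arcWeight y c t = ∫ t in (0 : ℝ)..2, φ (c * t) := rfl
    _ = (c : ℝ)⁻¹ * ((2 * c) * ∫ u in (0 : ℝ)..1, φ u) := by
      rw [intervalIntegral.integral_comp_mul_left φ hc0.ne', mul_zero, hperiods, smul_eq_mul]
    _ = 2 * ∫ u in (0 : ℝ)..1, φ u := by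
      field_simp
    _ ≤ 2 * (4 * (c * y) ^ (-(1 / 2) : ℝ)) := by
      gcongr
      exact integral_norm_add_rpow_le (mul_pos hc0 hy)
    _ = 8 * (c * y) ^ (-(1 / 2) : ℝ) := by ring

lemma norm_integral_arcWeight_mul_exp_le {y : ℝ} (hy : 0 < y) {c : ℕ} (hc : 1 ≤ c) (D : ℤ) :
    ‖∫ t in (0 : ℝ)..2, cexp (π * I * D * t) * arcWeight y c t‖ ≤
      if (c : ℤ) ∣ D then 8 * (c * y) ^ (-(1 / 2) : ℝ) else 0 := by
  split_ifs with hD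
  · refine (intervalIntegral.norm_integral_le_integral_norm zero_le_two).trans ?_
    refine le_trans (le_of_eq ?_) (integral_arcWeight_le hy hc)
    refine intervalIntegral.integral_congr fun t _ ↦ ?_
    have harg : π * I * D * t = ((π * D * t : ℝ) : ℂ) * I := by
      push_cast
      ring
    simp only [norm_mul, harg, norm_exp_ofReal_mul_I, one_mul, norm_real, Real.norm_eq_abs,
      abs_of_nonneg (arcWeight_nonneg hy.le c t)]
  · rw [integral_arcWeight_mul_exp_eq_zero y hc hD, norm_zero]

end ArcWeightIntegral

section CircleMethod

open Complex
open scoped Real ComplexConjugate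

lemma continuous_sum_mul_thetaTerm (S : Finset ℤ) (F : ℤ → ℂ) (y : ℝ) :
    Continuous fun t : ℝ ↦ ∑ m ∈ S, F m * thetaTerm m (t + y * I) := by
  unfold thetaTerm
  fun_prop

lemma thetaTerm_mul_conj_thetaTerm (m k : ℤ) (t y : ℝ) :
    thetaTerm m (t + y * I) * conj (thetaTerm k (t + y * I)) =
      Real.exp (-π * (m ^ 2 + k ^ 2) * y) * cexp (π * I * (m ^ 2 - k ^ 2 : ℤ) * t) := by
  rw [thetaTerm, thetaTerm, ← exp_conj, ofReal_exp, ← exp_add, ← exp_add]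
  congr 1
  simp only [map_mul, map_add, map_pow, conj_ofReal, conj_I, map_intCast]
  push_cast
  linear_combination (π * y * ((m : ℂ) ^ 2 + (k : ℂ) ^ 2)) * I_sq

lemma norm_integral_thetaTerm_mul_conj_mul_arcWeight_le {y : ℝ} (hy : 0 < y) {c : ℕ} (hc : 1 ≤ c)
    (m k : ℤ) :
    ‖∫ t in (0 : ℝ)..2,
        thetaTerm m (t + y * I) * conj (thetaTerm k (t + y * I)) * arcWeight y c t‖ ≤
      if (c : ℤ) ∣ m ^ 2 - k ^ 2 then 8 * (c * y) ^ (-(1 / 2) : ℝ) else 0 := by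
  have hexp : Real.exp (-π * (m ^ 2 + k ^ 2) * y) ≤ 1 := by
    rw [Real.exp_le_one_iff, neg_mul, neg_mul, neg_nonpos]
    positivity
  simp only [thetaTerm_mul_conj_thetaTerm, mul_assoc (Complex.ofReal (Real.exp _))]
  rw [intervalIntegral.integral_const_mul, norm_mul, norm_real, Real.norm_of_nonneg (by positivity)]
  exact (mul_le_of_le_one_left (norm_nonneg _) hexp).trans
    (norm_integral_arcWeight_mul_exp_le hy hc _)

lemma norm_integral_thetaTerm_mul_conj_mul_arcWeightSum_le {y : ℝ} (hy : 0 < y) (M : ℕ)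
    (m k : ℤ) :
    ‖∫ t in (0 : ℝ)..2,
        thetaTerm m (t + y * I) * conj (thetaTerm k (t + y * I)) * arcWeightSum y M t‖ ≤
      8 * y ^ (-(1 / 2) : ℝ) * divisorKernel M m k := by
  simp only [arcWeightSum, ofReal_sum, mul_sum]
  rw [intervalIntegral.integral_finsetSum fun c hc ↦ ?_]
  · refine (norm_sum_le _ _).trans ?_
    rw [divisorKernel, mul_sum, sum_filter]
    refine sum_le_sum fun c hc ↦ ?_
    refine (norm_integral_thetaTerm_mul_conj_mul_arcWeight_le hy (mem_Icc.mp hc).1 m k).trans_eq ?_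
    rw [Real.mul_rpow (Nat.cast_nonneg c) hy.le]
    congr 1
    ring
  · have hw := continuous_arcWeight hy (mem_Icc.mp hc).1
    refine Continuous.intervalIntegrable ?_ _ _
    unfold thetaTerm
    fun_prop

lemma integral_sq_norm_sum_thetaTerm_mul_arcWeightSum_le {y : ℝ} (hy : 0 < y) (M : ℕ)
    (B : Finset ℤ) {F : ℤ → ℝ} (hF : ∀ m, 0 ≤ F m) :
    ∫ t in (0 : ℝ)..2, ‖∑ m ∈ B, F m * thetaTerm m (t + y * I)‖ ^ 2 * arcWeightSum y M t ≤
      8 * y ^ (-(1 / 2) : ℝ) * ∑ m ∈ B, ∑ k ∈ B, F m * F k * divisorKernel M m k := by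
  let Θ (m k : ℤ) (t : ℝ) : ℂ :=
    thetaTerm m (t + y * I) * conj (thetaTerm k (t + y * I)) * arcWeightSum y M t
  have hΘ (m k : ℤ) : Continuous (Θ m k) := by
    have hw := continuous_arcWeightSum hy M
    simp only [Θ, thetaTerm]
    fun_prop
  have hexpand (t : ℝ) :
      ((‖∑ m ∈ B, F m * thetaTerm m (t + y * I)‖ ^ 2 * arcWeightSum y M t : ℝ) : ℂ) =
        ∑ m ∈ B, ∑ k ∈ B, F m * F k * Θ m k t := by
    rw [ofReal_mul, ofReal_pow, ← mul_conj', map_sum, sum_mul_sum, sum_mul]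
    refine sum_congr rfl fun m _ ↦ ?_
    rw [sum_mul]
    refine sum_congr rfl fun k _ ↦ ?_
    simp only [Θ, map_mul, conj_ofReal]
    ring
  have hintegral : ((∫ t in (0 : ℝ)..2,
      ‖∑ m ∈ B, F m * thetaTerm m (t + y * I)‖ ^ 2 * arcWeightSum y M t : ℝ) : ℂ) =
        ∑ m ∈ B, ∑ k ∈ B, F m * F k * ∫ t in (0 : ℝ)..2, Θ m k t := by
    rw [← intervalIntegral.integral_ofReal]
    simp only [hexpand]
    rw [intervalIntegral.integral_finsetSum fun m _ ↦
      Continuous.intervalIntegrable (by fun_prop) _ _]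
    refine sum_congr rfl fun m _ ↦ ?_
    rw [intervalIntegral.integral_finsetSum fun k _ ↦
      Continuous.intervalIntegrable (by fun_prop) _ _]
    simp only [intervalIntegral.integral_const_mul]
  refine (le_abs_self _).trans ?_
  rw [← Real.norm_eq_abs, ← norm_real, hintegral, mul_sum]
  refine (norm_sum_le _ _).trans (sum_le_sum fun m _ ↦ ?_)
  rw [mul_sum]
  refine (norm_sum_le _ _).trans (sum_le_sum fun k _ ↦ ?_)
  rw [norm_mul, norm_mul, norm_real, norm_real, Real.norm_of_nonneg (hF m),
    Real.norm_of_nonneg (hF k), mul_left_comm]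
  exact mul_le_mul_of_nonneg_left (norm_integral_thetaTerm_mul_conj_mul_arcWeightSum_le hy M m k)
    (mul_nonneg (hF m) (hF k))

lemma integral_exp_mul_add_eq_ite (k : ℤ) (y : ℝ) :
    ∫ t in (0 : ℝ)..2, cexp (π * I * k * (t + y * I)) = if k = 0 then 2 else 0 := by
  split_ifs with hk
  · simp [hk]
  · have hk0 : π * I * (k : ℂ) ≠ 0 := by simp [hk, Real.pi_ne_zero]
    have hperiod : cexp (π * I * k * (2 : ℝ)) = 1 := by
      rw [exp_eq_one_iff]
      exact ⟨k, by push_cast; ring⟩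
    simp only [mul_add, exp_add]
    rw [intervalIntegral.integral_mul_const, integral_exp_mul_complex hk0, hperiod]
    simp

lemma prod_mul_thetaTerm {n : ℕ} (F : Fin n → ℂ) (x : Fin n → ℤ) (τ : ℂ) :
    ∏ l, F l * thetaTerm (x l) τ = (∏ l, F l) * cexp (π * I * (∑ l, x l ^ 2 : ℤ) * τ) := by
  simp only [prod_mul_distrib, thetaTerm, ← exp_sum]
  push_cast
  simp only [mul_sum, sum_mul]

lemma integral_exp_mul_prod_sum_thetaTerm {n lam : ℕ} {S : Fin n → Finset ℤ}
    (hS : ∀ l, Icc (-(Nat.sqrt lam : ℤ)) (Nat.sqrt lam) ⊆ S l) (F : Fin n → ℤ → ℂ) (y : ℝ) :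
    ∫ t in (0 : ℝ)..2, cexp (π * I * (-lam : ℤ) * (t + y * I)) *
        ∏ l, ∑ m ∈ S l, F l m * thetaTerm m (t + y * I) =
      2 * ∑ x ∈ latticeSphere n lam, ∏ l, F l (x l) := by
  have hexpand (t : ℝ) : cexp (π * I * (-lam : ℤ) * (t + y * I)) *
      ∏ l, ∑ m ∈ S l, F l m * thetaTerm m (t + y * I) =
      ∑ x ∈ Fintype.piFinset S, (∏ l, F l (x l)) *
        cexp (π * I * (∑ l, x l ^ 2 - lam : ℤ) * (t + y * I)) := by
    rw [prod_univ_sum, mul_sum]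
    refine sum_congr rfl fun x _ ↦ ?_
    rw [prod_mul_thetaTerm, mul_left_comm, ← exp_add]
    congr 2
    push_cast
    ring
  have hsphere : {x ∈ Fintype.piFinset S | ∑ l, x l ^ 2 - (lam : ℤ) = 0} = latticeSphere n lam := by
    ext x
    rw [mem_filter, Fintype.mem_piFinset, sub_eq_zero, mem_latticeSphere]
    exact and_iff_right_of_imp fun hx l ↦ hS l (mem_Icc_sqrt_of_sum_sq_eq hx l)
  simp only [hexpand]
  rw [intervalIntegral.integral_finsetSum fun x _ ↦ Continuous.intervalIntegrable (by fun_prop) _ _]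
  simp only [intervalIntegral.integral_const_mul, integral_exp_mul_add_eq_ite, mul_ite, mul_zero]
  rw [← sum_filter, hsphere, ← sum_mul, mul_comm]

lemma norm_sum_latticeSphere_prod_le {n lam : ℕ} {S : Fin n → Finset ℤ}
    (hS : ∀ l, Icc (-(Nat.sqrt lam : ℤ)) (Nat.sqrt lam) ⊆ S l) (F : Fin n → ℤ → ℂ) (y : ℝ) :
    ‖∑ x ∈ latticeSphere n lam, ∏ l, F l (x l)‖ ≤ Real.exp (π * lam * y) / 2 *
      ∫ t in (0 : ℝ)..2, ∏ l, ‖∑ m ∈ S l, F l m * thetaTerm m (t + y * I)‖ := by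
  have hnorm (t : ℝ) : ‖cexp (π * I * (-lam : ℤ) * (t + y * I))‖ = Real.exp (π * lam * y) := by
    rw [norm_exp]
    simp
  have hint := (intervalIntegral.norm_integral_le_integral_norm (zero_le_two (α := ℝ))).trans'
    (congrArg norm (integral_exp_mul_prod_sum_thetaTerm hS F y)).ge
  simp only [norm_mul, hnorm, norm_prod, intervalIntegral.integral_const_mul, norm_ofNat] at hint
  linarith

end CircleMethod

section PairBound

open Complex
open scoped Real

lemma prod_update_update_const {ι β M : Type*} [Fintype ι] [DecidableEq ι] [CommMonoid M]
    (Φ : ι → β → M) {i j : ι} (hij : i ≠ j) (a b c : β) :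
    ∏ l, Φ l (Function.update (Function.update (fun _ ↦ c) j b) i a l) =
      Φ i a * (Φ j b * ∏ l ∈ (univ.erase i).erase j, Φ l c) := by
  rw [← mul_prod_erase univ _ (mem_univ i),
    ← mul_prod_erase (univ.erase i) _ (mem_erase.mpr ⟨hij.symm, mem_univ j⟩)]
  rw [Function.update_self, Function.update_of_ne hij.symm, Function.update_self]
  congr 2
  refine prod_congr rfl fun l hl ↦ ?_
  simp only [mem_erase, mem_univ, and_true] at hl
  rw [Function.update_of_ne hl.2, Function.update_of_ne hl.1]

lemma norm_sum_latticeSphere_mul_le {n lam : ℕ} {S : Finset ℤ}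
    (hS : Icc (-(Nat.sqrt lam : ℤ)) (Nat.sqrt lam) ⊆ S) {i j : Fin n} (hij : i ≠ j)
    (G H : ℤ → ℂ) (y : ℝ) :
    ‖∑ x ∈ latticeSphere n lam, G (x i) * H (x j)‖ ≤ Real.exp (π * lam * y) / 2 *
      ∫ t in (0 : ℝ)..2,
        ‖∑ m ∈ Icc (-(Nat.sqrt lam : ℤ)) (Nat.sqrt lam), G m * thetaTerm m (t + y * I)‖ *
        (‖∑ m ∈ Icc (-(Nat.sqrt lam : ℤ)) (Nat.sqrt lam), H m * thetaTerm m (t + y * I)‖ *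
        ‖∑ m ∈ S, thetaTerm m (t + y * I)‖ ^ (n - 2)) := by
  set B := Icc (-(Nat.sqrt lam : ℤ)) (Nat.sqrt lam)
  let P : Fin n → Finset ℤ × (ℤ → ℂ) :=
    Function.update (Function.update (fun _ ↦ (S, 1)) j (B, H)) i (B, G)
  have hBP (l : Fin n) : B ⊆ (P l).1 := by
    by_cases hi : l = i
    · simp [P, hi]
    by_cases hj : l = j
    · simp [P, hj, hij.symm]
    · simpa [P, hi, hj] using hS
  have hcard : #((univ.erase i).erase j) = n - 2 := by
    rw [card_erase_of_mem (mem_erase.mpr ⟨hij.symm, mem_univ j⟩), card_erase_of_mem (mem_univ i),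
      card_univ, Fintype.card_fin, Nat.sub_sub]
  have hsum (x : Fin n → ℤ) : ∏ l, (P l).2 (x l) = G (x i) * H (x j) := by
    have h := prod_update_update_const (fun l (p : Finset ℤ × (ℤ → ℂ)) ↦ p.2 (x l)) hij
      (B, G) (B, H) (S, 1)
    rw [h]
    simp
  have hnorm (t : ℝ) : ∏ l, ‖∑ m ∈ (P l).1, (P l).2 m * thetaTerm m (t + y * I)‖ =
      ‖∑ m ∈ B, G m * thetaTerm m (t + y * I)‖ * (‖∑ m ∈ B, H m * thetaTerm m (t + y * I)‖ *
        ‖∑ m ∈ S, thetaTerm m (t + y * I)‖ ^ (n - 2)) := by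
    have h := prod_update_update_const
      (fun _ (p : Finset ℤ × (ℤ → ℂ)) ↦ ‖∑ m ∈ p.1, p.2 m * thetaTerm m (t + y * I)‖) hij
      (B, G) (B, H) (S, 1)
    rw [h]
    simp [hcard]
  simpa only [hsum, hnorm] using norm_sum_latticeSphere_prod_le hBP (fun l ↦ (P l).2) y

lemma exp_mul_inv_sq_sqrt_le {lam : ℕ} (hlam : 1 ≤ lam) :
    Real.exp (π * lam * ((Nat.sqrt lam : ℝ) ^ 2)⁻¹) ≤ Real.exp (3 * π) := by
  have hN : 1 ≤ Nat.sqrt lam := Nat.sqrt_pos.mpr hlam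
  have hlamN : (lam : ℝ) ≤ 3 * (Nat.sqrt lam : ℝ) ^ 2 := by
    have := Nat.sqrt_le_add lam
    have : lam ≤ 3 * Nat.sqrt lam ^ 2 := by nlinarith
    exact_mod_cast this
  have hpos : (0 : ℝ) < (Nat.sqrt lam : ℝ) ^ 2 := by positivity
  rw [Real.exp_le_exp, ← div_eq_mul_inv, div_le_iff₀ hpos]
  calc π * lam ≤ π * (3 * (Nat.sqrt lam : ℝ) ^ 2) := by gcongr
    _ = 3 * π * (Nat.sqrt lam : ℝ) ^ 2 := by ring

lemma exists_integral_sq_norm_sum_thetaTerm_le :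
    ∃ C : ℝ, 0 ≤ C ∧ ∀ N : ℕ, 1 ≤ N → ∀ F : ℤ → ℝ, (∀ m, 0 ≤ F m) →
      ∑ m ∈ Icc (-(N : ℤ)) N, F m ^ (3 / 2 : ℝ) ≤ N →
      ∫ t in (0 : ℝ)..2,
        ‖∑ m ∈ Icc (-(N : ℤ)) N, F m * thetaTerm m (t + (((N : ℝ) ^ 2)⁻¹ : ℝ) * I)‖ ^ 2 *
          arcWeightSum ((N : ℝ) ^ 2)⁻¹ (2 * N) t ≤ C * N ^ 3 := by
  obtain ⟨K, hK, hkernel⟩ := exists_sum_mul_mul_divisorKernel_le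
  refine ⟨8 * K, by positivity, fun N hN F hF0 hF ↦ ?_⟩
  have hN0 : (0 : ℝ) < N := by exact_mod_cast hN
  have hpow : (((N : ℝ) ^ 2)⁻¹) ^ (-(1 / 2) : ℝ) = N := by
    rw [← Real.rpow_natCast, ← Real.rpow_neg hN0.le, ← Real.rpow_mul hN0.le]
    norm_num
  refine (integral_sq_norm_sum_thetaTerm_mul_arcWeightSum_le (by positivity) (2 * N) _ hF0).trans ?_
  rw [hpow]
  calc _ ≤ 8 * N * (K * (N : ℝ) ^ 2) := by
        gcongr
        exact hkernel N F hF0 hF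
    _ = 8 * K * N ^ 3 := by ring

lemma exists_integral_norm_theta_product_le (k : ℕ) :
    ∃ C : ℝ, 0 ≤ C ∧ ∀ N : ℕ, 1 ≤ N → ∀ S : Finset ℤ,
      (∀ τ : ℂ, τ.im = ((N : ℝ) ^ 2)⁻¹ → ‖jacobiTheta τ - ∑ m ∈ S, thetaTerm m τ‖ ≤ 1) →
      ∀ G H : ℤ → ℝ, (∀ m, 0 ≤ G m) → (∀ m, 0 ≤ H m) →
      ∑ m ∈ Icc (-(N : ℤ)) N, G m ^ (3 / 2 : ℝ) ≤ N →
      ∑ m ∈ Icc (-(N : ℤ)) N, H m ^ (3 / 2 : ℝ) ≤ N →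
      ∫ t in (0 : ℝ)..2,
        ‖∑ m ∈ Icc (-(N : ℤ)) N, G m * thetaTerm m (t + (((N : ℝ) ^ 2)⁻¹ : ℝ) * I)‖ *
        (‖∑ m ∈ Icc (-(N : ℤ)) N, H m * thetaTerm m (t + (((N : ℝ) ^ 2)⁻¹ : ℝ) * I)‖ *
        ‖∑ m ∈ S, thetaTerm m (t + (((N : ℝ) ^ 2)⁻¹ : ℝ) * I)‖ ^ (k + 3)) ≤
          C * (N : ℝ) ^ (k + 3) := by
  obtain ⟨C₁, hC₁, htheta⟩ := exists_norm_theta_le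
  obtain ⟨C₂, hC₂, hL2⟩ := exists_integral_sq_norm_sum_thetaTerm_le
  refine ⟨C₁ ^ (k + 1) * C₂, by positivity, fun N hN S hS G H hG0 hH0 hG hH ↦ ?_⟩
  set y : ℝ := ((N : ℝ) ^ 2)⁻¹
  have hy : 0 < y := by positivity
  let ΘG (t : ℝ) : ℝ := ‖∑ m ∈ Icc (-(N : ℤ)) N, G m * thetaTerm m (t + y * I)‖
  let ΘH (t : ℝ) : ℝ := ‖∑ m ∈ Icc (-(N : ℤ)) N, H m * thetaTerm m (t + y * I)‖
  let Θ (t : ℝ) : ℝ := ‖∑ m ∈ S, thetaTerm m (t + y * I)‖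
  let W (t : ℝ) : ℝ := arcWeightSum y (2 * N) t
  have hcG : Continuous ΘG := (continuous_sum_mul_thetaTerm _ (fun m ↦ (G m : ℂ)) y).norm
  have hcH : Continuous ΘH := (continuous_sum_mul_thetaTerm _ (fun m ↦ (H m : ℂ)) y).norm
  have hcΘ : Continuous Θ := by simpa using (continuous_sum_mul_thetaTerm S 1 y).norm
  have hcW : Continuous W := continuous_arcWeightSum hy _
  have him (t : ℝ) : (t + y * I : ℂ).im = y := by
    rw [add_im, ofReal_im, im_ofReal_mul, I_im, mul_one, zero_add]
  have hpointwise (t : ℝ) : ΘG t * (ΘH t * Θ t ^ (k + 3)) ≤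
      (C₁ * N) ^ k * C₁ / 2 * (ΘG t ^ 2 * W t + ΘH t ^ 2 * W t) := by
    obtain ⟨hsup, hcube⟩ := htheta N hN t _ (hS _ (him t))
    calc ΘG t * (ΘH t * Θ t ^ (k + 3)) = ΘG t * ΘH t * (Θ t ^ k * Θ t ^ 3) := by ring
      _ ≤ (ΘG t ^ 2 + ΘH t ^ 2) / 2 * ((C₁ * N) ^ k * (C₁ * W t)) := by
        gcongr
        linarith [two_mul_le_add_sq (ΘG t) (ΘH t)]
      _ = _ := by ring
  calc ∫ t in (0 : ℝ)..2, ΘG t * (ΘH t * Θ t ^ (k + 3))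
      ≤ ∫ t in (0 : ℝ)..2, (C₁ * N) ^ k * C₁ / 2 * (ΘG t ^ 2 * W t + ΘH t ^ 2 * W t) :=
        intervalIntegral.integral_mono_on zero_le_two
          (Continuous.intervalIntegrable (by fun_prop) _ _)
          (Continuous.intervalIntegrable (by fun_prop) _ _) fun t _ ↦ hpointwise t
    _ = (C₁ * N) ^ k * C₁ / 2 *
          ((∫ t in (0 : ℝ)..2, ΘG t ^ 2 * W t) + ∫ t in (0 : ℝ)..2, ΘH t ^ 2 * W t) := by
        rw [intervalIntegral.integral_const_mul, intervalIntegral.integral_add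
          (Continuous.intervalIntegrable (by fun_prop) _ _)
          (Continuous.intervalIntegrable (by fun_prop) _ _)]
    _ ≤ (C₁ * N) ^ k * C₁ / 2 * (C₂ * N ^ 3 + C₂ * N ^ 3) := by
        gcongr
        exacts [hL2 N hN G hG0 hG, hL2 N hN H hH0 hH]
    _ = C₁ ^ (k + 1) * C₂ * N ^ (k + 3) := by ring

theorem exists_sum_latticeSphere_mul_le (k : ℕ) :
    ∃ C : ℝ, 0 ≤ C ∧ ∀ lam : ℕ, 1 ≤ lam → ∀ i j : Fin (k + 5), i ≠ j → ∀ G H : ℤ → ℝ,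
      (∀ m, 0 ≤ G m) → (∀ m, 0 ≤ H m) →
      ∑ m ∈ Icc (-(Nat.sqrt lam : ℤ)) (Nat.sqrt lam), G m ^ (3 / 2 : ℝ) ≤ Nat.sqrt lam →
      ∑ m ∈ Icc (-(Nat.sqrt lam : ℤ)) (Nat.sqrt lam), H m ^ (3 / 2 : ℝ) ≤ Nat.sqrt lam →
      ∑ x ∈ latticeSphere (k + 5) lam, G (x i) * H (x j) ≤ C * (Nat.sqrt lam : ℝ) ^ (k + 3) := by
  obtain ⟨C, hC, hintegral⟩ := exists_integral_norm_theta_product_le k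
  refine ⟨Real.exp (3 * π) / 2 * C, by positivity, fun lam hlam i j hij G H hG0 hH0 hG hH ↦ ?_⟩
  have hN : 1 ≤ Nat.sqrt lam := Nat.sqrt_pos.mpr hlam
  obtain ⟨S, hBS, hS⟩ := exists_finset_norm_jacobiTheta_sub_sum_le
    (y := ((Nat.sqrt lam : ℝ) ^ 2)⁻¹) (by positivity) (Icc (-(Nat.sqrt lam : ℤ)) (Nat.sqrt lam))
  calc ∑ x ∈ latticeSphere (k + 5) lam, G (x i) * H (x j)
      ≤ ‖∑ x ∈ latticeSphere (k + 5) lam, (G (x i) : ℂ) * H (x j)‖ := by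
        simpa using re_le_norm (∑ x ∈ latticeSphere (k + 5) lam, (G (x i) : ℂ) * H (x j))
    _ ≤ _ := norm_sum_latticeSphere_mul_le hBS hij (fun m ↦ (G m : ℂ)) (fun m ↦ (H m : ℂ))
        ((Nat.sqrt lam : ℝ) ^ 2)⁻¹
    _ ≤ Real.exp (3 * π) / 2 * (C * (Nat.sqrt lam : ℝ) ^ (k + 3)) := by
        refine mul_le_mul ?_ (hintegral _ hN S hS G H hG0 hH0 hG hH)
          (intervalIntegral.integral_nonneg zero_le_two fun t _ ↦ by positivity) (by positivity)
        gcongr ?_ / 2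
        exact exp_mul_inv_sq_sqrt_le hlam
    _ = _ := by ring

end PairBound

section MaximalFunction

/-- The centered Hardy–Littlewood maximal function on `ℤ`. Averages over `[y - N, y + N]` are
normalized by `N` rather than `2 * N + 1`, which changes it by a bounded factor only. -/
def centeredMaximal (g : ℤ → ℝ≥0∞) (y : ℤ) : ℝ≥0∞ :=
  ⨆ (N : ℕ) (_ : 1 ≤ N), (N : ℝ≥0∞)⁻¹ * ∑ m ∈ Icc (-(N : ℤ)) N, g (y - m)

lemma centeredMaximal_le_add {g h : ℤ → ℝ≥0∞} {c : ℝ≥0∞} (hgh : ∀ z, g z ≤ h z + c) (y : ℤ) :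
    centeredMaximal g y ≤ centeredMaximal h y + 3 * c := by
  refine iSup₂_le fun N hN ↦ ?_
  have hcard : (#(Icc (-(N : ℤ)) N) : ℝ≥0∞) ≤ N * 3 := by
    rw [Int.card_Icc]
    norm_cast
    lia
  have hN0 : (N : ℝ≥0∞) ≠ 0 := by exact_mod_cast (zero_lt_one.trans_le hN).ne'
  calc (N : ℝ≥0∞)⁻¹ * ∑ m ∈ Icc (-(N : ℤ)) N, g (y - m)
      ≤ (N : ℝ≥0∞)⁻¹ * (∑ m ∈ Icc (-(N : ℤ)) N, h (y - m) + #(Icc (-(N : ℤ)) N) * c) := by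
        rw [← nsmul_eq_mul, ← sum_const, ← sum_add_distrib]
        gcongr
        exact hgh _
    _ ≤ (N : ℝ≥0∞)⁻¹ * (∑ m ∈ Icc (-(N : ℤ)) N, h (y - m) + N * 3 * c) := by gcongr
    _ = (N : ℝ≥0∞)⁻¹ * ∑ m ∈ Icc (-(N : ℤ)) N, h (y - m) + 3 * c := by
        rw [mul_add, mul_assoc (N : ℝ≥0∞),
          ENNReal.inv_mul_cancel_left hN0 (ENNReal.natCast_ne_top N)]
    _ ≤ centeredMaximal h y + 3 * c := by
        gcongr
        exact le_iSup₂ (f := fun (N : ℕ) (_ : 1 ≤ N) ↦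
          (N : ℝ≥0∞)⁻¹ * ∑ m ∈ Icc (-(N : ℤ)) N, h (y - m)) N hN

lemma closedBall_natCast (y : ℤ) (N : ℕ) :
    Metric.closedBall y (N : ℝ) = Set.Icc (y - N) (y + N) := by
  simp [Int.closedBall_eq_Icc]

lemma withDensity_count_closedBall (g : ℤ → ℝ≥0∞) (y : ℤ) (N : ℕ) :
    Measure.count.withDensity g (Metric.closedBall y (N : ℝ)) =
      ∑ m ∈ Icc (-(N : ℤ)) N, g (y - m) := by
  rw [withDensity_apply _ (MeasurableSet.of_discrete), closedBall_natCast, ← coe_Icc,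
    lintegral_finset]
  simp only [Measure.count_singleton, mul_one]
  refine sum_nbij' (y - ·) (y - ·) ?_ ?_ ?_ ?_ ?_ <;> simp <;> lia

lemma count_closedBall_five_mul_le (y : ℤ) {N : ℕ} (hN : 1 ≤ N) :
    Measure.count (Metric.closedBall y (5 * N : ℝ)) ≤ 11 * N := by
  have h := closedBall_natCast y (5 * N)
  push_cast at h
  rw [h, ← coe_Icc, Measure.count_apply_finset, Int.card_Icc]
  norm_cast
  lia

lemma mul_count_le_of_forall_mul_le_closedBall {ν : Measure ℤ} [IsFiniteMeasure ν] {t : ℝ≥0∞}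
    (ht : t ≠ 0) {A : Set ℤ} {N : ℤ → ℕ} (hN : ∀ y ∈ A, 1 ≤ N y)
    (hνN : ∀ y ∈ A, t * N y ≤ ν (Metric.closedBall y (N y : ℝ))) :
    t * Measure.count A ≤ 11 * ν Set.univ := by
  have hbounded (y : ℤ) (hy : y ∈ A) : (N y : ℝ) ≤ (ν Set.univ / t).toReal := by
    rw [← ENNReal.toReal_natCast]
    refine ENNReal.toReal_mono (ENNReal.div_ne_top (measure_ne_top _ _) ht) ?_
    rw [ENNReal.le_div_iff_mul_le (.inl ht) (.inr (measure_ne_top _ _)), mul_comm]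
    exact (hνN y hy).trans (measure_mono (Set.subset_univ _))
  obtain ⟨u, hu, hdisj, hcover⟩ := Vitali.exists_disjoint_subfamily_covering_enlargement_closedBall
    A (fun y ↦ y) (fun y ↦ (N y : ℝ)) _ hbounded 5 (by norm_num)
  have hsubset : A ⊆ ⋃ b ∈ u, Metric.closedBall b (5 * N b : ℝ) := by
    intro y hy
    obtain ⟨b, hb, hyb⟩ := hcover y hy
    exact Set.mem_biUnion hb (hyb (Metric.mem_closedBall_self (Nat.cast_nonneg _)))
  calc t * Measure.count A
      ≤ t * ∑' b : u, Measure.count (Metric.closedBall (b : ℤ) (5 * N b : ℝ)) := by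
        gcongr
        exact (measure_mono hsubset).trans (measure_biUnion_le _ u.to_countable _)
    _ ≤ ∑' b : u, 11 * ν (Metric.closedBall (b : ℤ) (N b : ℝ)) := by
        rw [← ENNReal.tsum_mul_left]
        refine ENNReal.tsum_le_tsum fun b ↦ ?_
        calc _ ≤ t * (11 * N b) := by
              gcongr
              exact count_closedBall_five_mul_le _ (hN b (hu b.2))
          _ = 11 * (t * N b) := by ring
          _ ≤ _ := by
              gcongr
              exact hνN b (hu b.2)
    _ = 11 * ν (⋃ b ∈ u, Metric.closedBall b (N b : ℝ)) := by
        rw [ENNReal.tsum_mul_left, measure_biUnion u.to_countable hdisj fun _ _ ↦ .of_discrete]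
    _ ≤ 11 * ν Set.univ := by
        gcongr
        exact Set.subset_univ _

theorem mul_count_lt_centeredMaximal_le (g : ℤ → ℝ≥0∞) (t : ℝ≥0∞) :
    t * Measure.count {y | t < centeredMaximal g y} ≤ 11 * ∑' y, g y := by
  rcases eq_or_ne t 0 with rfl | ht
  · simp
  rcases eq_or_ne (∑' y, g y) ∞ with hg | hg
  · simp [hg]
  have hball (y : ℤ) (hy : t < centeredMaximal g y) : ∃ N : ℕ, 1 ≤ N ∧
      t * N ≤ Measure.count.withDensity g (Metric.closedBall y (N : ℝ)) := by
    obtain ⟨N, hN, ht⟩ : ∃ N : ℕ, ∃ _ : 1 ≤ N,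
        t < (N : ℝ≥0∞)⁻¹ * ∑ m ∈ Icc (-(N : ℤ)) N, g (y - m) := by
      simpa only [centeredMaximal, lt_iSup_iff] using hy
    refine ⟨N, hN, ?_⟩
    rw [withDensity_count_closedBall]
    refine ENNReal.mul_le_of_le_div ?_
    rw [div_eq_mul_inv, mul_comm]
    exact ht.le
  choose! N hN hνN using hball
  rw [← lintegral_count] at hg ⊢
  have := isFiniteMeasure_withDensity hg
  rw [← setLIntegral_univ, ← withDensity_apply _ .univ]
  exact mul_count_le_of_forall_mul_le_closedBall ht hN hνN

lemma mul_count_lt_centeredMaximal_le_tsum_indicator (g : ℤ → ℝ≥0∞) (t : ℝ≥0∞) :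
    t * Measure.count {y | 6 * t < centeredMaximal g y} ≤
      11 * ∑' y, {z | t < g z}.indicator g y := by
  set h := {z | t < g z}.indicator g
  have hgh (z : ℤ) : g z ≤ h z + t := by
    by_cases hz : t < g z
    · simp [h, hz]
    · simpa [h, hz] using not_lt.mp hz
  have hsubset : {y | 6 * t < centeredMaximal g y} ⊆ {y | 3 * t < centeredMaximal h y} := by
    intro y hy
    by_contra hle
    rw [Set.mem_ofPred_eq, not_lt] at hle
    refine (centeredMaximal_le_add hgh y).not_gt (lt_of_le_of_lt ?_ hy)
    calc centeredMaximal h y + 3 * t ≤ 3 * t + 3 * t := by gcongr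
      _ = 6 * t := by ring
  calc t * Measure.count {y | 6 * t < centeredMaximal g y}
      ≤ 3 * t * Measure.count {y | 3 * t < centeredMaximal h y} := by
        gcongr
        exact le_mul_of_one_le_left' (by norm_num)
    _ ≤ 11 * ∑' y, h y := mul_count_lt_centeredMaximal_le h (3 * t)

lemma rpow_eq_lintegral_ite (a : ℝ≥0∞) {p : ℝ} (hp : 0 < p) :
    a ^ p = ENNReal.ofReal p * ∫⁻ t in Set.Ioi (0 : ℝ),
      if ENNReal.ofReal t < a then ENNReal.ofReal (t ^ (p - 1)) else 0 := by
  induction a with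
  | top =>
    have hdiv : ∫⁻ t in Set.Ioi (0 : ℝ), ENNReal.ofReal (t ^ (p - 1)) = ∞ := by
      by_contra hfin
      refine not_integrableOn_Ioi_rpow (p - 1) ⟨by fun_prop, ?_⟩
      rw [hasFiniteIntegral_iff_ofReal]
      · exact lt_top_iff_ne_top.mpr hfin
      · filter_upwards [self_mem_ae_restrict measurableSet_Ioi] with t ht
        exact Real.rpow_nonneg (le_of_lt ht) _
    simp [hdiv, hp]
  | coe b =>
    have h := lintegral_rpow_eq_lintegral_meas_lt_mul (Measure.dirac ()) (f := fun _ ↦ (b : ℝ))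
      (.of_forall fun _ ↦ b.2) aemeasurable_const hp
    rw [lintegral_dirac, ← ENNReal.ofReal_rpow_of_nonneg (NNReal.coe_nonneg b) hp.le,
      ENNReal.ofReal_coe_nnreal] at h
    rw [h]
    congr 1
    refine setLIntegral_congr_fun measurableSet_Ioi fun t ht ↦ ?_
    have hlt : ENNReal.ofReal t < b ↔ t < b := by
      rw [← ENNReal.ofReal_coe_nnreal, ENNReal.ofReal_lt_ofReal_iff_of_nonneg (le_of_lt ht)]
    by_cases htb : t < b <;> simp [hlt, htb]

lemma tsum_mul_lintegral_ite {f : ℤ → ℝ≥0∞} (w : ℤ → ℝ≥0∞) (s : ℝ) :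
    ∑' y, w y * ∫⁻ t in Set.Ioi (0 : ℝ),
        (if ENNReal.ofReal t < f y then ENNReal.ofReal (t ^ s) else 0) =
      ∫⁻ t in Set.Ioi (0 : ℝ), ENNReal.ofReal (t ^ s) *
        ∑' y, {z | ENNReal.ofReal t < f z}.indicator w y := by
  have hmeas (y : ℤ) : Measurable fun t : ℝ ↦
      if ENNReal.ofReal t < f y then ENNReal.ofReal (t ^ s) else 0 :=
    Measurable.ite (measurableSet_lt (by fun_prop) measurable_const) (by fun_prop) (by fun_prop)
  simp_rw [← lintegral_const_mul _ (hmeas _), ← ENNReal.tsum_mul_left]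
  rw [← lintegral_tsum fun y ↦ ((hmeas y).const_mul _).aemeasurable]
  refine lintegral_congr fun t ↦ tsum_congr fun y ↦ ?_
  by_cases hy : ENNReal.ofReal t < f y <;> simp [hy, mul_comm]

lemma ofReal_rpow_mul_tsum_indicator_centeredMaximal_le (g : ℤ → ℝ≥0∞) (s : ℝ) {t : ℝ}
    (ht : 0 < t) :
    ENNReal.ofReal (t ^ s) *
        ∑' y, {z | ENNReal.ofReal t < centeredMaximal g z / 6}.indicator 1 y ≤
      11 * (ENNReal.ofReal (t ^ (s - 1)) * ∑' y, {z | ENNReal.ofReal t < g z}.indicator g y) := by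
  have hset : {z | ENNReal.ofReal t < centeredMaximal g z / 6} =
      {z | 6 * ENNReal.ofReal t < centeredMaximal g z} := by
    ext z
    rw [Set.mem_ofPred_eq, Set.mem_ofPred_eq,
      ENNReal.lt_div_iff_mul_lt (.inl (by norm_num)) (.inl (by norm_num)), mul_comm]
  have hpow : t ^ s = t ^ (s - 1) * t := by
    rw [Real.rpow_sub_one ht.ne', div_mul_cancel₀ _ ht.ne']
  rw [hset, ← lintegral_count, lintegral_indicator_one .of_discrete, hpow,
    ENNReal.ofReal_mul (by positivity), mul_left_comm, mul_assoc]
  exact mul_le_mul_right (mul_count_lt_centeredMaximal_le_tsum_indicator g _) _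

lemma mul_lintegral_ite_rpow (a : ℝ≥0∞) {r : ℝ} (hr : 1 < r) :
    a * ∫⁻ t in Set.Ioi (0 : ℝ),
        (if ENNReal.ofReal t < a then ENNReal.ofReal (t ^ (r - 1 - 1)) else 0) =
      (ENNReal.ofReal (r - 1))⁻¹ * a ^ r := by
  have hr1 : 0 < r - 1 := sub_pos.mpr hr
  have hsplit : a ^ r = a * a ^ (r - 1) := by
    conv_lhs => rw [← add_sub_cancel 1 r, ENNReal.rpow_add_of_nonneg _ _ zero_le_one hr1.le,
      ENNReal.rpow_one]
  rw [hsplit, rpow_eq_lintegral_ite a hr1, mul_left_comm,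
    ENNReal.inv_mul_cancel_left (by simpa using hr) ENNReal.ofReal_ne_top]

lemma tsum_centeredMaximal_div_six_rpow_le {r : ℝ} (hr : 1 < r) (g : ℤ → ℝ≥0∞) :
    ∑' y, (centeredMaximal g y / 6) ^ r ≤
      ENNReal.ofReal r * (11 * (ENNReal.ofReal (r - 1))⁻¹) * ∑' y, g y ^ r := by
  calc ∑' y, (centeredMaximal g y / 6) ^ r
      = ENNReal.ofReal r * ∫⁻ t in Set.Ioi (0 : ℝ), ENNReal.ofReal (t ^ (r - 1)) *
          ∑' y, {z | ENNReal.ofReal t < centeredMaximal g z / 6}.indicator 1 y := by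
        rw [← tsum_mul_lintegral_ite]
        simp only [rpow_eq_lintegral_ite _ (zero_lt_one.trans hr), ENNReal.tsum_mul_left,
          Pi.one_apply, one_mul]
    _ ≤ ENNReal.ofReal r * ∫⁻ t in Set.Ioi (0 : ℝ), 11 * (ENNReal.ofReal (t ^ (r - 1 - 1)) *
          ∑' y, {z | ENNReal.ofReal t < g z}.indicator g y) :=
        mul_le_mul_right (setLIntegral_mono' measurableSet_Ioi fun t ht ↦
          ofReal_rpow_mul_tsum_indicator_centeredMaximal_le g (r - 1) ht) _
    _ = ENNReal.ofReal r * (11 * (ENNReal.ofReal (r - 1))⁻¹) * ∑' y, g y ^ r := by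
        rw [lintegral_const_mul' _ _ (by norm_num), ← tsum_mul_lintegral_ite]
        simp only [mul_lintegral_ite_rpow _ hr, ENNReal.tsum_mul_left, mul_assoc]

theorem exists_tsum_centeredMaximal_rpow_le {r : ℝ} (hr : 1 < r) :
    ∃ C : ℝ≥0, ∀ g : ℤ → ℝ≥0∞, ∑' y, centeredMaximal g y ^ r ≤ C * ∑' y, g y ^ r := by
  have hr1 : ENNReal.ofReal (r - 1) ≠ 0 := by simpa using hr
  refine ⟨(6 ^ r * (ENNReal.ofReal r * (11 * (ENNReal.ofReal (r - 1))⁻¹))).toNNReal, fun g ↦ ?_⟩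
  rw [ENNReal.coe_toNNReal (by finiteness)]
  calc ∑' y, centeredMaximal g y ^ r = 6 ^ r * ∑' y, (centeredMaximal g y / 6) ^ r := by
        simp only [← ENNReal.tsum_mul_left,
          ← ENNReal.mul_rpow_of_nonneg _ _ (zero_lt_one.trans hr).le,
          ENNReal.mul_div_cancel (by norm_num : (6 : ℝ≥0∞) ≠ 0) (by norm_num)]
    _ ≤ _ := by
        rw [mul_assoc (6 ^ r)]
        gcongr
        exact tsum_centeredMaximal_div_six_rpow_le hr g

end MaximalFunction

section Combination

lemma prod_le_sum_mul_finRotate {n : ℕ} (hn : n ≠ 0) {u : Fin n → ℝ} (hu : ∀ j, 0 ≤ u j) :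
    ∏ j, u j ≤ ∑ j, (n : ℝ)⁻¹ * (u j ^ (n / 2 : ℝ) * u (finRotate n j) ^ (n / 2 : ℝ)) := by
  have hn0 : (n : ℝ) ≠ 0 := Nat.cast_ne_zero.mpr hn
  have hpow (j : Fin n) : u j ^ (n / 2 : ℝ) * u j ^ (n / 2 : ℝ) = u j ^ (n : ℝ) := by
    rw [← Real.rpow_add_of_nonneg (hu j) (by positivity) (by positivity), add_halves]
  have hprod : ∏ j, (u j ^ (n / 2 : ℝ) * u (finRotate n j) ^ (n / 2 : ℝ)) ^ (n : ℝ)⁻¹ =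
      ∏ j, u j := by
    have hpair (j : Fin n) : 0 ≤ u j ^ (n / 2 : ℝ) * u (finRotate n j) ^ (n / 2 : ℝ) :=
      mul_nonneg (Real.rpow_nonneg (hu _) _) (Real.rpow_nonneg (hu _) _)
    rw [Real.finsetProd_rpow _ _ fun j _ ↦ hpair j, prod_mul_distrib,
      Equiv.prod_comp (finRotate n) (fun j ↦ u j ^ (n / 2 : ℝ)), ← prod_mul_distrib]
    simp only [hpow]
    rw [Real.finsetProd_rpow _ _ fun j _ ↦ hu j,
      Real.rpow_rpow_inv (prod_nonneg fun j _ ↦ hu j) hn0]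
  rw [← hprod]
  exact Real.geom_mean_le_arith_mean_weighted univ (fun _ ↦ (n : ℝ)⁻¹) _
    (fun _ _ ↦ by positivity) (by simp [hn0])
    fun j _ ↦ mul_nonneg (Real.rpow_nonneg (hu _) _) (Real.rpow_nonneg (hu _) _)

lemma exists_sum_latticeSphere_prod_le_of_sum_rpow_le (k : ℕ) :
    ∃ C : ℝ, 0 ≤ C ∧ ∀ lam : ℕ, 1 ≤ lam → ∀ F : Fin (k + 5) → ℤ → ℝ, (∀ j m, 0 ≤ F j m) →
      (∀ j, ∑ m ∈ Icc (-(Nat.sqrt lam : ℤ)) (Nat.sqrt lam),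
        F j m ^ (3 * (k + 5 : ℕ) / 4 : ℝ) ≤ Nat.sqrt lam) →
      ∑ x ∈ latticeSphere (k + 5) lam, ∏ j, F j (x j) ≤ C * (Nat.sqrt lam : ℝ) ^ (k + 3) := by
  obtain ⟨C, hC, hpair⟩ := exists_sum_latticeSphere_mul_le k
  refine ⟨C, hC, fun lam hlam ↦ ?_⟩
  set n := k + 5
  intro F hF0 hF
  have hrot (j : Fin n) : j ≠ finRotate n j := by
    have : j ∈ (finRotate n).support := by simp
    exact (Equiv.Perm.mem_support.mp this).symm
  have hF' (j : Fin n) : ∑ m ∈ Icc (-(Nat.sqrt lam : ℤ)) (Nat.sqrt lam),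
      (F j m ^ (n / 2 : ℝ)) ^ (3 / 2 : ℝ) ≤ Nat.sqrt lam := by
    refine (sum_congr rfl fun m _ ↦ ?_).trans_le (hF j)
    rw [← Real.rpow_mul (hF0 j m)]
    congr 1
    ring
  calc ∑ x ∈ latticeSphere n lam, ∏ j, F j (x j)
      ≤ ∑ x ∈ latticeSphere n lam, ∑ j, (n : ℝ)⁻¹ *
          (F j (x j) ^ (n / 2 : ℝ) * F (finRotate n j) (x (finRotate n j)) ^ (n / 2 : ℝ)) :=
        sum_le_sum fun x _ ↦ prod_le_sum_mul_finRotate (by lia) fun j ↦ hF0 j (x j)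
    _ = ∑ j, (n : ℝ)⁻¹ * ∑ x ∈ latticeSphere n lam,
          F j (x j) ^ (n / 2 : ℝ) * F (finRotate n j) (x (finRotate n j)) ^ (n / 2 : ℝ) := by
        rw [sum_comm]
        simp only [mul_sum]
    _ ≤ ∑ _j : Fin n, (n : ℝ)⁻¹ * (C * (Nat.sqrt lam : ℝ) ^ (k + 3)) := by
        gcongr with j
        exact hpair lam hlam j _ (hrot j) (fun m ↦ F j m ^ (n / 2 : ℝ))
          (fun m ↦ F (finRotate n j) m ^ (n / 2 : ℝ)) (fun m ↦ Real.rpow_nonneg (hF0 _ m) _)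
          (fun m ↦ Real.rpow_nonneg (hF0 _ m) _) (hF' j) (hF' _)
    _ = C * (Nat.sqrt lam : ℝ) ^ (k + 3) := by
        rw [sum_const, card_univ, Fintype.card_fin, nsmul_eq_mul, mul_inv_cancel_left₀]
        positivity

/-- The `p`-th power mean of `F` over `[-N, N]`, normalized by `N` as in `centeredMaximal`. -/
def powerMean (p : ℝ) (N : ℕ) (F : ℤ → ℝ) : ℝ :=
  ((N : ℝ)⁻¹ * ∑ m ∈ Icc (-(N : ℤ)) N, F m ^ p) ^ p⁻¹

section PowerMean

variable {p : ℝ} {N : ℕ} {F : ℤ → ℝ}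

lemma powerMean_rpow (hp : p ≠ 0) (hF : ∀ m, 0 ≤ F m) :
    powerMean p N F ^ p = (N : ℝ)⁻¹ * ∑ m ∈ Icc (-(N : ℤ)) N, F m ^ p :=
  Real.rpow_inv_rpow
    (mul_nonneg (by positivity) (sum_nonneg fun m _ ↦ Real.rpow_nonneg (hF m) p)) hp

lemma powerMean_nonneg (hF : ∀ m, 0 ≤ F m) : 0 ≤ powerMean p N F :=
  Real.rpow_nonneg (mul_nonneg (by positivity) (sum_nonneg fun m _ ↦ Real.rpow_nonneg (hF m) p)) _

lemma eq_zero_of_powerMean_eq_zero (hp : 0 < p) (hN : N ≠ 0) (hF : ∀ m, 0 ≤ F m)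
    (h : powerMean p N F = 0) {m : ℤ} (hm : m ∈ Icc (-(N : ℤ)) N) : F m = 0 := by
  have hmean := powerMean_rpow (N := N) hp.ne' hF
  rw [h, Real.zero_rpow hp.ne', eq_comm, mul_eq_zero_iff_left (by positivity),
    sum_eq_zero_iff_of_nonneg fun m _ ↦ Real.rpow_nonneg (hF m) p] at hmean
  exact (Real.rpow_eq_zero (hF m) hp.ne').mp (hmean m hm)

lemma sum_div_powerMean_rpow (hp : 0 < p) (hN : N ≠ 0) (hF : ∀ m, 0 ≤ F m)
    (h : powerMean p N F ≠ 0) :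
    ∑ m ∈ Icc (-(N : ℤ)) N, (F m / powerMean p N F) ^ p = N := by
  have hpos := Real.rpow_pos_of_pos ((powerMean_nonneg hF).lt_of_ne' h) p
  simp only [Real.div_rpow (hF _) (powerMean_nonneg hF)]
  rw [← sum_div, div_eq_iff hpos.ne', powerMean_rpow hp.ne' hF,
    mul_inv_cancel_left₀ (by positivity)]

end PowerMean

lemma exists_sum_latticeSphere_prod_le (k : ℕ) :
    ∃ C : ℝ, 0 ≤ C ∧ ∀ lam : ℕ, 1 ≤ lam → ∀ F : Fin (k + 5) → ℤ → ℝ, (∀ j m, 0 ≤ F j m) →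
      ∑ x ∈ latticeSphere (k + 5) lam, ∏ j, F j (x j) ≤ C * (Nat.sqrt lam : ℝ) ^ (k + 3) *
        ∏ j, powerMean (3 * (k + 5 : ℕ) / 4) (Nat.sqrt lam) (F j) := by
  obtain ⟨C, hC, hnormalized⟩ := exists_sum_latticeSphere_prod_le_of_sum_rpow_le k
  refine ⟨C, hC, fun lam hlam F hF ↦ ?_⟩
  have hN : Nat.sqrt lam ≠ 0 := (Nat.sqrt_pos.mpr hlam).ne'
  have hp : 0 < (3 * (k + 5 : ℕ) / 4 : ℝ) := by positivity
  set a : Fin (k + 5) → ℝ := fun j ↦ powerMean (3 * (k + 5 : ℕ) / 4) (Nat.sqrt lam) (F j)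
  have ha0 (j : Fin (k + 5)) : 0 ≤ a j := powerMean_nonneg (hF j)
  by_cases hzero : ∃ j, a j = 0
  · obtain ⟨j, hj⟩ := hzero
    rw [sum_eq_zero fun x hx ↦ prod_eq_zero (mem_univ j) <| eq_zero_of_powerMean_eq_zero hp hN
      (hF j) hj (mem_Icc_sqrt_of_sum_sq_eq (mem_latticeSphere.mp hx) j)]
    exact mul_nonneg (by positivity) (prod_nonneg fun j _ ↦ ha0 j)
  · push Not at hzero
    have hscale (x : Fin (k + 5) → ℤ) :
        ∏ j, F j (x j) = (∏ j, F j (x j) / a j) * ∏ j, a j := by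
      simp only [← prod_mul_distrib, div_mul_cancel₀ _ (hzero _)]
    simp only [hscale]
    rw [← sum_mul]
    refine mul_le_mul_of_nonneg_right ?_ (prod_nonneg fun j _ ↦ ha0 j)
    exact hnormalized lam hlam (fun j m ↦ F j m / a j) (fun j m ↦ div_nonneg (hF j m) (ha0 j))
      fun j ↦ (sum_div_powerMean_rpow hp hN (hF j) (hzero j)).le

lemma exists_norm_mulAvg_le (k : ℕ) :
    ∃ C : ℝ≥0, ∀ lam : ℕ, 1 ≤ lam → ∀ (f : Fin (k + 5) → ℤ → ℂ) (y : ℤ),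
      ‖mulAvg (k + 5) lam f y‖ ≤
        C * ∏ j, powerMean (3 * (k + 5 : ℕ) / 4) (Nat.sqrt lam) fun m ↦ ‖f j (y - m)‖ := by
  obtain ⟨C, hC, hsum⟩ := exists_sum_latticeSphere_prod_le k
  obtain ⟨D, hD⟩ := exists_sqrt_pow_le_sphereCount k
  refine ⟨⟨C * D, by positivity⟩, fun lam hlam f y ↦ ?_⟩
  have : 0 < Nat.sqrt lam := Nat.sqrt_pos.mpr hlam
  have hcount : (Nat.sqrt lam : ℝ) ^ (k + 3) ≤ D * sphereCount (k + 5) lam := by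
    exact_mod_cast hD lam
  have hcount0 : (sphereCount (k + 5) lam : ℝ) ≠ 0 := by
    intro h0
    rw [h0, mul_zero] at hcount
    exact (by positivity : (0 : ℝ) < (Nat.sqrt lam : ℝ) ^ (k + 3)).not_ge hcount
  set P := ∏ j, powerMean (3 * (k + 5 : ℕ) / 4) (Nat.sqrt lam) fun m ↦ ‖f j (y - m)‖
  have hP : 0 ≤ P := prod_nonneg fun j _ ↦ powerMean_nonneg fun m ↦ norm_nonneg _
  have hnum : ‖∑ x ∈ latticeSphere (k + 5) lam, ∏ j, f j (y - x j)‖ ≤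
      C * (D * sphereCount (k + 5) lam) * P := by
    refine (norm_sum_le _ _).trans ?_
    simp only [norm_prod]
    refine (hsum lam hlam (fun j m ↦ ‖f j (y - m)‖) fun j m ↦ norm_nonneg _).trans ?_
    gcongr
  rw [mulAvg, ← coe_latticeSphere, finsum_mem_coe_finset, norm_mul, norm_inv, Complex.norm_natCast]
  calc _ ≤ (sphereCount (k + 5) lam : ℝ)⁻¹ * (C * (D * sphereCount (k + 5) lam) * P) := by gcongr
    _ = C * D * P := by field_simp

lemma ofReal_powerMean_le_centeredMaximal {p : ℝ} (hp : 0 < p) {N : ℕ} (hN : 1 ≤ N) (f : ℤ → ℂ)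
    (y : ℤ) :
    ENNReal.ofReal (powerMean p N fun m ↦ ‖f (y - m)‖) ≤
      centeredMaximal (fun z ↦ (‖f z‖₊ : ℝ≥0∞) ^ p) y ^ p⁻¹ := by
  have hN0 : (0 : ℝ) < N := by exact_mod_cast hN
  rw [powerMean, ← ENNReal.ofReal_rpow_of_nonneg (by positivity) (by positivity)]
  gcongr
  rw [ENNReal.ofReal_mul (by positivity), ENNReal.ofReal_inv_of_pos hN0, ENNReal.ofReal_natCast,
    ENNReal.ofReal_sum_of_nonneg fun m _ ↦ by positivity]
  simp only [← ENNReal.ofReal_rpow_of_nonneg (norm_nonneg _) hp.le, ofReal_norm, enorm_eq_nnnorm]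
  exact le_iSup₂ (f := fun (N : ℕ) (_ : 1 ≤ N) ↦
    (N : ℝ≥0∞)⁻¹ * ∑ m ∈ Icc (-(N : ℤ)) N, (‖f (y - m)‖₊ : ℝ≥0∞) ^ p) N hN

theorem exists_maxFn_le {n : ℕ} (hn : 5 ≤ n) :
    ∃ C : ℝ≥0, ∀ (f : Fin n → ℤ → ℂ) (y : ℤ), maxFn n f y ≤
      C * ∏ j, centeredMaximal (fun z ↦ (‖f j z‖₊ : ℝ≥0∞) ^ (3 * n / 4 : ℝ)) y ^
        (3 * n / 4 : ℝ)⁻¹ := by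
  obtain ⟨k, rfl⟩ := Nat.exists_eq_add_of_le' hn
  obtain ⟨C, hC⟩ := exists_norm_mulAvg_le k
  refine ⟨C, fun f y ↦ iSup₂_le fun lam hlam ↦ ?_⟩
  calc (‖mulAvg (k + 5) lam f y‖₊ : ℝ≥0∞)
      ≤ ENNReal.ofReal
          (C * ∏ j, powerMean (3 * (k + 5 : ℕ) / 4) (Nat.sqrt lam) fun m ↦ ‖f j (y - m)‖) := by
        rw [← enorm_eq_nnnorm, ← ofReal_norm]
        exact ENNReal.ofReal_le_ofReal (hC lam hlam f y)
    _ = C * ∏ j, ENNReal.ofReal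
          (powerMean (3 * (k + 5 : ℕ) / 4) (Nat.sqrt lam) fun m ↦ ‖f j (y - m)‖) := by
        rw [ENNReal.ofReal_mul (NNReal.coe_nonneg C), ENNReal.ofReal_coe_nnreal,
          ENNReal.ofReal_prod_of_nonneg fun j _ ↦ powerMean_nonneg fun m ↦ norm_nonneg _]
    _ ≤ _ := by
        gcongr with j
        exact ofReal_powerMean_le_centeredMaximal (by positivity) (Nat.sqrt_pos.mpr hlam) (f j) y

lemma tsum_prod_rpow_inv_le {n : ℕ} (hn : n ≠ 0) (h : Fin n → ℤ → ℝ≥0∞) :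
    ∑' y, ∏ j, h j y ^ (n : ℝ)⁻¹ ≤ ∏ j, (∑' y, h j y) ^ (n : ℝ)⁻¹ := by
  have := ENNReal.lintegral_prod_norm_pow_le (μ := (Measure.count : Measure ℤ)) univ (f := h)
    (fun j _ ↦ (measurable_of_countable _).aemeasurable) (p := fun _ ↦ (n : ℝ)⁻¹)
    (by simp [hn]) fun j _ ↦ by positivity
  simpa only [lintegral_count] using this

lemma exists_tsum_maxFn_rpow_le {n : ℕ} (hn : 5 ≤ n) {q : ℝ} (hq : 3 / 4 < q) :
    ∃ C : ℝ≥0, ∀ f : Fin n → ℤ → ℂ, ∑' y, maxFn n f y ^ q ≤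
      C * ∏ j, (∑' x, (‖f j x‖₊ : ℝ≥0∞) ^ (n * q)) ^ (n : ℝ)⁻¹ := by
  obtain ⟨C, hC⟩ := exists_maxFn_le hn
  obtain ⟨D, hD⟩ := exists_tsum_centeredMaximal_rpow_le (r := 4 * q / 3) (by linarith)
  have hn0 : (n : ℝ) ≠ 0 := by positivity
  have hq0 : 0 < q := by linarith
  refine ⟨C ^ q * D, fun f ↦ ?_⟩
  let M (j : Fin n) (y : ℤ) : ℝ≥0∞ :=
    centeredMaximal (fun z ↦ (‖f j z‖₊ : ℝ≥0∞) ^ (3 * n / 4 : ℝ)) y ^ (4 * q / 3)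
  have hM (j : Fin n) : ∑' y, M j y ≤ D * ∑' x, (‖f j x‖₊ : ℝ≥0∞) ^ (n * q) := by
    refine (hD _).trans_eq ?_
    simp only [← ENNReal.rpow_mul]
    congr! 4
    ring
  have hpointwise (y : ℤ) : maxFn n f y ^ q ≤ C ^ q * ∏ j, M j y ^ (n : ℝ)⁻¹ := by
    have hexponent : (3 * n / 4 : ℝ)⁻¹ * q = 4 * q / 3 * (n : ℝ)⁻¹ := by field
    refine (ENNReal.rpow_le_rpow (hC f y) hq0.le).trans_eq ?_
    rw [ENNReal.mul_rpow_of_nonneg _ _ hq0.le, ← ENNReal.prod_rpow_of_nonneg hq0.le]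
    simp only [M, ← ENNReal.rpow_mul, hexponent]
  calc ∑' y, maxFn n f y ^ q ≤ ∑' y, C ^ q * ∏ j, M j y ^ (n : ℝ)⁻¹ :=
        ENNReal.tsum_le_tsum hpointwise
    _ ≤ C ^ q * ∏ j, (∑' y, M j y) ^ (n : ℝ)⁻¹ := by
        rw [ENNReal.tsum_mul_left]
        gcongr
        exact tsum_prod_rpow_inv_le (by lia) M
    _ ≤ C ^ q * ∏ j, (D * ∑' x, (‖f j x‖₊ : ℝ≥0∞) ^ (n * q)) ^ (n : ℝ)⁻¹ := by
        gcongr with j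
        exact hM j
    _ = _ := by
        simp only [ENNReal.mul_rpow_of_nonneg _ _ (inv_nonneg.mpr (Nat.cast_nonneg n))]
        rw [prod_mul_distrib, prod_const, card_univ, Fintype.card_fin, ← ENNReal.rpow_mul_natCast,
          inv_mul_cancel₀ hn0, ENNReal.rpow_one, ← mul_assoc, ENNReal.coe_mul,
          ENNReal.coe_rpow_of_nonneg _ hq0.le]

end Combination

theorem statement1_general {n : ℕ} (hn : 5 ≤ n) {q : ℝ} (hq : 3 / 4 < q) :
    ∃ C : ℝ≥0, ∀ f : Fin n → ℤ → ℂ,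
      lqNormE q (maxFn n f) ≤ C * ∏ i, _root_.lpNorm (n * q) (f i) := by
  obtain ⟨C, hC⟩ := exists_tsum_maxFn_rpow_le hn hq
  have hq0 : 0 ≤ 1 / q := by positivity
  have hexponent : (n : ℝ)⁻¹ * (1 / q) = 1 / (n * q) := by rw [← one_div, one_div_mul_one_div]
  refine ⟨C ^ (1 / q), fun f ↦ ?_⟩
  calc lqNormE q (maxFn n f)
      ≤ (C * ∏ i, (∑' x, (‖f i x‖₊ : ℝ≥0∞) ^ (n * q)) ^ (n : ℝ)⁻¹) ^ (1 / q) :=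
        ENNReal.rpow_le_rpow (hC f) hq0
    _ = _ := by
        simp only [ENNReal.mul_rpow_of_nonneg _ _ hq0, ← ENNReal.prod_rpow_of_nonneg hq0,
          ← ENNReal.rpow_mul, hexponent, ENNReal.coe_rpow_of_nonneg _ hq0, _root_.lpNorm]

/-- For `n ≥ 5`, `1 ≤ q < ∞` and `p = n q`, the maximal operator `A_*`
is bounded from `ℓ^p × ⋯ × ℓ^p` to `ℓ^q`. -/
theorem statement1 (n : ℕ) (hn : 5 ≤ n) (q : ℝ) (hq : 1 ≤ q) :
    ∃ C : ℝ≥0, ∀ f : Fin n → ℤ → ℂ, (∀ i, lpNorm (n * q) (f i) ≠ ∞) →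
      lqNormE q (maxFn n f) ≤ (C : ℝ≥0∞) * ∏ i, lpNorm (n * q) (f i) := by
  obtain ⟨C, hC⟩ := statement1_general hn (q := q) (by linarith)
  exact ⟨C, fun f _ ↦ hC f⟩
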